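/- arXiv:2502.16445 — 2 statements merged into one kernel-verified Lean document; each statement's English description precedes it below -/
import Mathlib

section
/- Let γ_d denote the standard Gaussian measure on ℝ^d and let ν be a probability measure on ℝ^d with D_KL(ν‖γ_d) < ∞. Then the infimum, over all couplings π of γ_d and ν, of the quadratic transport cost ∫ ‖x − y‖² dπ(x,y) is at most 2·D_KL(ν‖γ_d); equivalently, W₂(γ_d, ν)² ≤ 2·D_KL(ν‖γ_d). (Talagrand transportation-cost inequality, Theorem 4.3 of the paper with π₀ the standard Gaussian.) -/
open MeasureTheory ENNReal
open scoped Classical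

noncomputable section

/-- A coupling of `μ` and `ν`: a probability measure on the product whose
first marginal is `μ` and whose second marginal is `ν`. -/
def IsCoupling {d : ℕ}
    (π : Measure (EuclideanSpace ℝ (Fin d) × EuclideanSpace ℝ (Fin d)))
    (μ ν : Measure (EuclideanSpace ℝ (Fin d))) : Prop :=
  IsProbabilityMeasure π ∧ π.map Prod.fst = μ ∧ π.map Prod.snd = ν

/-- The quadratic transport cost `∫ ‖x − y‖² dπ(x,y)` of a plan `π`. -/
def transportCost {d : ℕ}
    (π : Measure (EuclideanSpace ℝ (Fin d) × EuclideanSpace ℝ (Fin d))) : ℝ≥0∞ :=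
  ∫⁻ p, ENNReal.ofReal (‖p.1 - p.2‖ ^ 2) ∂π

/-- The squared Wasserstein-2 distance: the infimum of the quadratic transport cost
over all couplings of `μ` and `ν`. -/
def W2sq {d : ℕ} (μ ν : Measure (EuclideanSpace ℝ (Fin d))) : ℝ≥0∞ :=
  sInf {c : ℝ≥0∞ | ∃ π, IsCoupling π μ ν ∧ c = transportCost π}

/-- The Kullback–Leibler divergence `D_KL(ν‖μ) = ∫ log(dν/dμ) dν` when `ν ≪ μ`
(and this integral makes sense), and `+∞` otherwise. -/
def klDiv {α : Type*} [MeasurableSpace α] (ν μ : Measure α) : ℝ≥0∞ :=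
  if ν ≪ μ ∧ Integrable (llr ν μ) ν then ENNReal.ofReal (∫ x, llr ν μ x ∂ν) else ∞

/-- The standard Gaussian measure on `ℝ^d`, with density
`(2π)^(−d/2) exp(−‖x‖²/2)` with respect to Lebesgue measure. -/
def stdGaussian (d : ℕ) : Measure (EuclideanSpace ℝ (Fin d)) :=
  volume.withDensity fun x =>
    ENNReal.ofReal ((2 * Real.pi) ^ (-(d : ℝ) / 2) * Real.exp (-‖x‖ ^ 2 / 2))

/-!
Let `T` be the increasing rearrangement of a measure `ρ` on the line onto the Gaussian `γ` of mean
`a`, variance `v` and density `φ`. The density of `ρ` is `T' * φ ∘ T`, so `log r ≤ r - 1` at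
`r = 1 / T'` gives
`(T y - y)² / (2v) ≤ log (dρ/dγ) + 1 / T' - (y - a) * (T y - a) / v + (T y - a)² / v - 1`.
The last two terms cancel in `ρ`-mean since `T` maps `ρ` to `γ`. For the two before them, no
differentiability of `T` is needed: `∫_{t > s} (T t - a) dρ = v * φ (T s)` is `v / T' s` times the
density of `ρ`, and Fubini turns the integral of the left side over `s` into
`∫ (t - a) * (T t - a) dρ`.

In higher dimension the inequality tensorizes. The relative entropy of a measure on a product is
that of its first marginal plus the mean of those of its conditional laws, and plans for the
conditional laws, chosen measurably, can be glued over a plan for the first marginal.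
-/

section Rearrangement

open ProbabilityTheory hiding stdGaussian
open Set Filter Topology

/-- The quantile function of a probability measure `m` on `ℝ`, the generalised inverse of its
distribution function, set to `0` outside `(0, 1)`. -/
def quantile (m : Measure ℝ) : ℝ → ℝ :=
  (Ioo 0 1).indicator fun u ↦ sInf {x | u ≤ cdf m x}

section Quantile

variable (m : Measure ℝ)

variable {m} in
lemma quantile_le_iff {u : ℝ} (hu : u ∈ Ioo (0 : ℝ) 1) (x : ℝ) :
    quantile m u ≤ x ↔ u ≤ cdf m x := by
  have hne : {x | u ≤ cdf m x}.Nonempty :=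
    ((tendsto_cdf_atTop m).eventually_const_le hu.2).exists
  obtain ⟨b, hb⟩ := ((tendsto_cdf_atBot m).eventually_lt_const hu.1).exists
  have hbdd : BddBelow {x | u ≤ cdf m x} :=
    ⟨b, fun y hy ↦ ((monotone_cdf m).reflect_lt (hb.trans_le hy)).le⟩
  rw [quantile, indicator_of_mem hu]
  refine ⟨fun h ↦ ?_, fun h ↦ csInf_le hbdd h⟩
  refine ge_of_tendsto (((cdf m).right_continuous x).mono_left
    (nhdsWithin_mono x Ioi_subset_Ici_self)) (eventually_mem_nhdsWithin.mono fun y hy ↦ ?_)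
  obtain ⟨z, hz, hzy⟩ := exists_lt_of_csInf_lt hne (h.trans_lt hy)
  exact hz.trans (monotone_cdf m hzy.le)

lemma measurable_quantile : Measurable (quantile m) := by
  refine measurable_of_Iic fun x ↦ ?_
  have h : quantile m ⁻¹' Iic x = Ioo 0 1 ∩ Iic (cdf m x) ∪ (Ioo 0 1)ᶜ ∩ {_u | 0 ≤ x} := by
    ext u
    by_cases hu : u ∈ Ioo (0 : ℝ) 1
    · simp [quantile_le_iff hu, hu]
    · simp [quantile, hu]
  rw [h]
  measurability

lemma volume_restrict_Ioo_Iic {u : ℝ} (h1 : u ≤ 1) :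
    volume.restrict (Ioo 0 1) (Iic u) = ENNReal.ofReal u := by
  rw [restrict_Ioo_eq_restrict_Ioc, Measure.restrict_apply measurableSet_Iic,
    Iic_inter_Ioc_of_le h1, Real.volume_Ioc, sub_zero]

lemma map_quantile [IsProbabilityMeasure m] :
    (volume.restrict (Ioo 0 1)).map (quantile m) = m := by
  refine Measure.ext_of_Iic _ _ fun x ↦ ?_
  rw [Measure.map_apply (measurable_quantile m) measurableSet_Iic, ← ofReal_cdf,
    ← volume_restrict_Ioo_Iic (cdf_le_one m x)]
  refine measure_congr ?_
  filter_upwards [ae_restrict_mem measurableSet_Ioo] with u hu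
  exact propext (quantile_le_iff hu x)

end Quantile

section NoAtoms

variable (ρ : Measure ℝ) [IsProbabilityMeasure ρ] [NullSingletonClass ρ]

lemma continuous_cdf : Continuous (cdf ρ) := by
  refine continuous_iff_continuousAt.2 fun x ↦ ?_
  have hjump : (cdf ρ).measure {x} = 0 := by rw [measure_cdf]; exact measure_singleton x
  rw [StieltjesFunction.measure_singleton, ENNReal.ofReal_eq_zero] at hjump
  rw [(monotone_cdf ρ).continuousAt_iff_leftLim_eq_rightLim, StieltjesFunction.rightLim_eq]
  exact le_antisymm ((monotone_cdf ρ).leftLim_le le_rfl) (by linarith)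

variable {ρ} in
lemma cdf_quantile {u : ℝ} (hu : u ∈ Ioo (0 : ℝ) 1) : cdf ρ (quantile ρ u) = u := by
  obtain ⟨x, rfl⟩ : ∃ x, cdf ρ x = u := mem_range_of_exists_le_of_exists_ge (continuous_cdf ρ)
    ((tendsto_cdf_atBot ρ).eventually_le_const hu.1).exists
    ((tendsto_cdf_atTop ρ).eventually_const_le hu.2).exists
  exact le_antisymm (monotone_cdf ρ ((quantile_le_iff hu x).2 le_rfl))
    ((quantile_le_iff hu _).1 le_rfl)

lemma map_cdf : ρ.map (cdf ρ) = volume.restrict (Ioo 0 1) := by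
  have hcdf : cdf ρ ∘ quantile ρ =ᵐ[volume.restrict (Ioo 0 1)] id := by
    filter_upwards [ae_restrict_mem measurableSet_Ioo] with u hu
    exact cdf_quantile hu
  calc ρ.map (cdf ρ) = ((volume.restrict (Ioo 0 1)).map (quantile ρ)).map (cdf ρ) := by
        rw [map_quantile]
    _ = (volume.restrict (Ioo 0 1)).map (cdf ρ ∘ quantile ρ) :=
        Measure.map_map (monotone_cdf ρ).measurable (measurable_quantile ρ)
    _ = volume.restrict (Ioo 0 1) := by rw [Measure.map_congr hcdf, Measure.map_id]

lemma ae_cdf_mem_Ioo : ∀ᵐ y ∂ρ, cdf ρ y ∈ Ioo (0 : ℝ) 1 := by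
  refine ae_of_ae_map (monotone_cdf ρ).measurable.aemeasurable (p := (· ∈ Ioo 0 1)) ?_
  rw [map_cdf]
  exact ae_restrict_mem measurableSet_Ioo

end NoAtoms

/-- The increasing rearrangement of `ρ` onto `m`. -/
def monotoneRearrangement (ρ m : Measure ℝ) (y : ℝ) : ℝ := quantile m (cdf ρ y)

lemma measurable_monotoneRearrangement (ρ m : Measure ℝ) :
    Measurable (monotoneRearrangement ρ m) :=
  (measurable_quantile m).comp (monotone_cdf ρ).measurable

lemma measurable_monotoneRearrangement_kernel {X : Type*} [MeasurableSpace X] (κ : Kernel X ℝ)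
    [IsMarkovKernel κ] (m : Measure ℝ) :
    Measurable fun p : X × ℝ ↦ monotoneRearrangement (κ p.1) m p.2 := by
  refine (measurable_quantile m).comp ?_
  simp_rw [cdf_eq_real]
  have h : MeasurableSet {q : (X × ℝ) × ℝ | q.2 ≤ q.1.2} :=
    measurableSet_le measurable_snd (measurable_snd.comp measurable_fst)
  exact (Kernel.measurable_kernel_prodMk_left
    (κ := κ.comap Prod.fst measurable_fst) h).ennreal_toReal

lemma measurePreserving_monotoneRearrangement (ρ m : Measure ℝ) [IsProbabilityMeasure ρ]
    [NullSingletonClass ρ] [IsProbabilityMeasure m] :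
    MeasurePreserving (monotoneRearrangement ρ m) ρ m where
  measurable := measurable_monotoneRearrangement ρ m
  map_eq := by
    calc ρ.map (monotoneRearrangement ρ m) = (ρ.map (cdf ρ)).map (quantile m) :=
          (Measure.map_map (measurable_quantile m) (monotone_cdf ρ).measurable).symm
      _ = m := by rw [map_cdf, map_quantile]

lemma integral_comp_monotoneRearrangement {ρ m : Measure ℝ} [IsProbabilityMeasure ρ]
    [NullSingletonClass ρ] [IsProbabilityMeasure m] {g : ℝ → ℝ} (hg : AEStronglyMeasurable g m) :
    ∫ y, g (monotoneRearrangement ρ m y) ∂ρ = ∫ x, g x ∂m := by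
  have hT := measurePreserving_monotoneRearrangement ρ m
  calc ∫ y, g (monotoneRearrangement ρ m y) ∂ρ = ∫ x, g x ∂ρ.map (monotoneRearrangement ρ m) :=
        (integral_map hT.measurable.aemeasurable (hT.map_eq.symm ▸ hg)).symm
    _ = ∫ x, g x ∂m := by rw [hT.map_eq]

lemma cdf_monotoneRearrangement {ρ m : Measure ℝ} [IsProbabilityMeasure m] [NullSingletonClass m]
    {y : ℝ} (hy : cdf ρ y ∈ Ioo (0 : ℝ) 1) : cdf m (monotoneRearrangement ρ m y) = cdf ρ y :=
  cdf_quantile hy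

lemma preimage_monotoneRearrangement_Ioi_ae_eq {ρ m : Measure ℝ} [IsProbabilityMeasure ρ]
    [NullSingletonClass ρ] [IsProbabilityMeasure m] [NullSingletonClass m] {s : ℝ}
    (hs : cdf ρ s ∈ Ioo (0 : ℝ) 1) :
    monotoneRearrangement ρ m ⁻¹' Ioi (monotoneRearrangement ρ m s) =ᵐ[ρ] Ioi s := by
  have hT := measurePreserving_monotoneRearrangement ρ m
  refine ae_eq_of_ae_subset_of_measure_ge ?_ ?_
    (hT.measurable measurableSet_Ioi).nullMeasurableSet (measure_ne_top _ _)
  · filter_upwards [ae_cdf_mem_Ioo ρ] with t ht hst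
    refine (monotone_cdf ρ).reflect_lt ?_
    rw [← cdf_monotoneRearrangement (m := m) hs]
    exact not_le.1 fun h ↦ not_le_of_gt hst ((quantile_le_iff ht _).2 h)
  · rw [hT.measure_preimage measurableSet_Ioi.nullMeasurableSet,
      ← compl_Iic, ← compl_Iic, prob_compl_eq_one_sub measurableSet_Iic,
      prob_compl_eq_one_sub measurableSet_Iic, ← ofReal_cdf ρ, ← ofReal_cdf m,
      cdf_monotoneRearrangement hs]

lemma setIntegral_Ioi_comp_monotoneRearrangement {ρ m : Measure ℝ} [IsProbabilityMeasure ρ]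
    [NullSingletonClass ρ] [IsProbabilityMeasure m] [NullSingletonClass m] {g : ℝ → ℝ}
    (hg : AEStronglyMeasurable g m) {s : ℝ} (hs : cdf ρ s ∈ Ioo (0 : ℝ) 1) :
    ∫ t in Ioi s, g (monotoneRearrangement ρ m t) ∂ρ =
      ∫ x in Ioi (monotoneRearrangement ρ m s), g x ∂m := by
  have hT := measurePreserving_monotoneRearrangement ρ m
  calc ∫ t in Ioi s, g (monotoneRearrangement ρ m t) ∂ρ
      = ∫ t in monotoneRearrangement ρ m ⁻¹' Ioi (monotoneRearrangement ρ m s),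
          g (monotoneRearrangement ρ m t) ∂ρ :=
        (setIntegral_congr_set (preimage_monotoneRearrangement_Ioi_ae_eq hs)).symm
    _ = ∫ x in Ioi (monotoneRearrangement ρ m s), g x ∂ρ.map (monotoneRearrangement ρ m) :=
        (setIntegral_map measurableSet_Ioi (hT.map_eq.symm ▸ hg) hT.measurable.aemeasurable).symm
    _ = ∫ x in Ioi (monotoneRearrangement ρ m s), g x ∂m := by rw [hT.map_eq]

end Rearrangement

section TailIntegral

open Set

/-- The kernel `1_{s < t} - 1_{s < a}`, as a function of `s` the indicator of the oriented interval
from `a` to `t`. Subtracting the second term makes it integrable in `s`, at no cost in `t` when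
integrated against a function of mean zero. -/
def orientedIndicator (a s t : ℝ) : ℝ := (Iio t).indicator 1 s - (Iio a).indicator 1 s

lemma orientedIndicator_eq_sign_mul (a s t : ℝ) :
    orientedIndicator a s t = SignType.sign (t - a) * (Ico (min a t) (max a t)).indicator 1 s := by
  rcases lt_trichotomy a t with h | rfl | h
  · simp only [orientedIndicator, indicator_apply, mem_Ico, mem_Iio, min_eq_left h.le,
      max_eq_right h.le, sign_pos (sub_pos.2 h), SignType.coe_one, Pi.one_apply]
    grind
  · simp [orientedIndicator]
  · simp only [orientedIndicator, indicator_apply, mem_Ico, mem_Iio, min_eq_right h.le,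
      max_eq_left h.le, sign_neg (sub_neg.2 h), SignType.coe_neg_one, Pi.one_apply]
    grind

lemma integrable_orientedIndicator (a t : ℝ) : Integrable fun s ↦ orientedIndicator a s t := by
  simp_rw [orientedIndicator_eq_sign_mul]
  exact ((integrable_indicator_iff measurableSet_Ico).2 (integrableOn_const (by simp))).const_mul _

lemma integral_orientedIndicator (a t : ℝ) : ∫ s, orientedIndicator a s t = t - a := by
  simp_rw [orientedIndicator_eq_sign_mul]
  rw [integral_const_mul, integral_indicator_one measurableSet_Ico,
    Real.volume_real_Ico_of_le min_le_max, max_sub_min_eq_abs, sign_mul_abs]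

lemma integral_norm_orientedIndicator (a t : ℝ) : ∫ s, ‖orientedIndicator a s t‖ = |t - a| := by
  have hone (s : ℝ) : ‖(Ico (min a t) (max a t)).indicator (1 : ℝ → ℝ) s‖ =
      (Ico (min a t) (max a t)).indicator 1 s :=
    Real.norm_of_nonneg (indicator_nonneg (fun _ _ ↦ zero_le_one) s)
  simp_rw [orientedIndicator_eq_sign_mul, norm_mul, hone]
  rw [integral_const_mul, integral_indicator_one measurableSet_Ico,
    Real.volume_real_Ico_of_le min_le_max, max_sub_min_eq_abs, Real.norm_eq_abs]
  nth_rewrite 2 [← abs_abs]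
  rw [← abs_mul, sign_mul_abs]

lemma measurable_orientedIndicator (a : ℝ) :
    Measurable fun p : ℝ × ℝ ↦ orientedIndicator a p.1 p.2 :=
  (Measurable.ite (measurableSet_lt measurable_fst measurable_snd) measurable_const
    measurable_const).sub ((measurable_one.indicator measurableSet_Iio).comp measurable_fst)

lemma integral_orientedIndicator_mul {ρ : Measure ℝ} {g : ℝ → ℝ} (hg : Integrable g ρ)
    (hg0 : ∫ t, g t ∂ρ = 0) (a s : ℝ) :
    ∫ t, orientedIndicator a s t * g t ∂ρ = ∫ t in Ioi s, g t ∂ρ := by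
  have h (t : ℝ) : orientedIndicator a s t * g t =
      (Ioi s).indicator g t - (Iio a).indicator 1 s * g t := by
    by_cases hst : s < t <;> simp [orientedIndicator, hst, sub_mul]
  simp_rw [h]
  rw [integral_sub (hg.indicator measurableSet_Ioi) (hg.const_mul _), integral_const_mul, hg0,
    mul_zero, sub_zero, integral_indicator measurableSet_Ioi]

lemma integrable_orientedIndicator_mul {ρ : Measure ℝ} [SFinite ρ] {g : ℝ → ℝ}
    (hg : AEStronglyMeasurable g ρ) {a : ℝ} (hag : Integrable (fun t ↦ (t - a) * g t) ρ) :
    Integrable (fun p : ℝ × ℝ ↦ orientedIndicator a p.1 p.2 * g p.2) (volume.prod ρ) := by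
  have hmeas : AEStronglyMeasurable (fun p : ℝ × ℝ ↦ orientedIndicator a p.1 p.2 * g p.2)
      (volume.prod ρ) := (measurable_orientedIndicator a).aestronglyMeasurable.mul hg.comp_snd
  refine (integrable_prod_iff' hmeas).2
    ⟨ae_of_all _ fun t ↦ (integrable_orientedIndicator a t).mul_const (g t), ?_⟩
  simp_rw [norm_mul, integral_mul_const, integral_norm_orientedIndicator, ← Real.norm_eq_abs,
    ← norm_mul]
  exact hag.norm

section Centered

variable {ρ : Measure ℝ} [SFinite ρ] {g : ℝ → ℝ} (hg : Integrable g ρ)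
  (hg0 : ∫ t, g t ∂ρ = 0) {a : ℝ} (hag : Integrable (fun t ↦ (t - a) * g t) ρ)

include hg hg0 hag

lemma integrable_setIntegral_Ioi : Integrable fun s ↦ ∫ t in Ioi s, g t ∂ρ := by
  simpa only [integral_orientedIndicator_mul hg hg0] using
    (integrable_orientedIndicator_mul hg.1 hag).integral_prod_left

lemma integral_setIntegral_Ioi : ∫ s, ∫ t in Ioi s, g t ∂ρ = ∫ t, (t - a) * g t ∂ρ := by
  calc ∫ s, ∫ t in Ioi s, g t ∂ρ = ∫ s, ∫ t, orientedIndicator a s t * g t ∂ρ := by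
        simp only [integral_orientedIndicator_mul hg hg0]
    _ = ∫ t, (∫ s, orientedIndicator a s t * g t) ∂ρ :=
        integral_integral_swap (integrable_orientedIndicator_mul hg.1 hag)
    _ = ∫ t, (t - a) * g t ∂ρ := by simp only [integral_mul_const, integral_orientedIndicator]

end Centered

lemma setIntegral_Ioi_eq_zero_of_cdf_notMem_Ioo {ρ : Measure ℝ} [IsProbabilityMeasure ρ]
    {g : ℝ → ℝ} (hg0 : ∫ t, g t ∂ρ = 0) {s : ℝ} (hs : ProbabilityTheory.cdf ρ s ∉ Ioo (0 : ℝ) 1) :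
    ∫ t in Ioi s, g t ∂ρ = 0 := by
  rcases (ProbabilityTheory.cdf_nonneg ρ s).eq_or_lt with h0 | h0
  · have hIic : ρ (Iic s) = 0 := by rw [← ProbabilityTheory.ofReal_cdf, ← h0, ENNReal.ofReal_zero]
    have huniv : Ioi s =ᵐ[ρ] univ := by rwa [ae_eq_univ, compl_Ioi]
    rw [setIntegral_congr_set huniv, setIntegral_univ, hg0]
  · have h1 : 1 ≤ ProbabilityTheory.cdf ρ s := not_lt.1 fun h ↦ hs ⟨h0, h⟩
    refine setIntegral_measure_zero _ ?_
    rw [← compl_Iic, prob_compl_eq_one_sub measurableSet_Iic, ← ProbabilityTheory.ofReal_cdf,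
      tsub_eq_zero_of_le (ENNReal.one_le_ofReal.2 h1)]

end TailIntegral

section RadonNikodym

open InformationTheory (klFun)

variable {X : Type*} [MeasurableSpace X] {ρ μ : Measure X}

section Quotient

variable {h : X → ℝ}

lemma rnDeriv_smul_div_rnDeriv_le (hh : 0 ≤ h) (x : X) :
    (ρ.rnDeriv μ x).toReal • (h x / (ρ.rnDeriv μ x).toReal) ≤ h x := by
  rw [smul_eq_mul]
  rcases eq_or_ne (ρ.rnDeriv μ x).toReal 0 with hq | hq
  · rw [hq, zero_mul]
    exact hh x
  · rw [mul_div_cancel₀ _ hq]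

lemma integrable_rnDeriv_smul_div_rnDeriv (hh : 0 ≤ h) (hint : Integrable h μ) :
    Integrable (fun x ↦ (ρ.rnDeriv μ x).toReal • (h x / (ρ.rnDeriv μ x).toReal)) μ := by
  have hq : AEMeasurable (fun x ↦ (ρ.rnDeriv μ x).toReal) μ := by fun_prop
  refine hint.mono' (hq.smul (hint.1.aemeasurable.div hq)).aestronglyMeasurable
    (ae_of_all _ fun x ↦ ?_)
  rw [Real.norm_of_nonneg (smul_nonneg ENNReal.toReal_nonneg
    (div_nonneg (hh x) ENNReal.toReal_nonneg))]
  exact rnDeriv_smul_div_rnDeriv_le hh x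

variable [SigmaFinite ρ] [SigmaFinite μ]

lemma integrable_div_rnDeriv (hac : ρ ≪ μ) (hh : 0 ≤ h) (hint : Integrable h μ) :
    Integrable (fun x ↦ h x / (ρ.rnDeriv μ x).toReal) ρ :=
  (integrable_rnDeriv_smul_iff hac).1 (integrable_rnDeriv_smul_div_rnDeriv hh hint)

lemma integral_div_rnDeriv_le (hac : ρ ≪ μ) (hh : 0 ≤ h) (hint : Integrable h μ) :
    ∫ x, h x / (ρ.rnDeriv μ x).toReal ∂ρ ≤ ∫ x, h x ∂μ := by
  rw [← integral_rnDeriv_smul hac]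
  exact integral_mono (integrable_rnDeriv_smul_div_rnDeriv hh hint) hint
    (rnDeriv_smul_div_rnDeriv_le hh)

end Quotient

lemma mul_le_klFun_add_exp {a : ℝ} (ha : 0 ≤ a) (b : ℝ) : a * b ≤ klFun a + Real.exp b := by
  rw [InformationTheory.klFun_apply]
  rcases ha.eq_or_lt with rfl | ha
  · simp only [zero_mul, zero_add, sub_zero]
    positivity
  have hlog := Real.log_le_sub_one_of_pos (show 0 < Real.exp b / a by positivity)
  rw [Real.log_div (by positivity) ha.ne', Real.log_exp] at hlog
  calc a * b = a * (b - Real.log a) + a * Real.log a := by ring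
    _ ≤ a * (Real.exp b / a - 1) + a * Real.log a := by gcongr
    _ = a * Real.log a - a + Real.exp b := by field_simp; ring
    _ ≤ a * Real.log a + 1 - a + Real.exp b := by linarith

lemma integrable_of_integrable_exp [IsFiniteMeasure ρ] [IsFiniteMeasure μ] {g : X → ℝ}
    (hg : AEStronglyMeasurable g μ) (hg0 : 0 ≤ g)
    (hexp : Integrable (fun x ↦ Real.exp (g x)) μ) (hkl : InformationTheory.klDiv ρ μ ≠ ∞) :
    Integrable g ρ := by
  obtain ⟨hac, hllr⟩ := InformationTheory.klDiv_ne_top_iff.1 hkl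
  rw [← integrable_rnDeriv_smul_iff hac]
  refine (((InformationTheory.integrable_klFun_rnDeriv_iff hac).2 hllr).add hexp).mono'
    ((Measure.measurable_rnDeriv ρ μ).ennreal_toReal.aestronglyMeasurable.smul hg)
    (ae_of_all _ fun x ↦ ?_)
  rw [Real.norm_of_nonneg (smul_nonneg ENNReal.toReal_nonneg (hg0 x))]
  exact mul_le_klFun_add_exp ENNReal.toReal_nonneg _

open ProbabilityTheory in
lemma memLp_id_two_of_klDiv_ne_top {E : Type*} [NormedAddCommGroup E] [NormedSpace ℝ E]
    [CompleteSpace E] [SecondCountableTopology E] [MeasurableSpace E] [BorelSpace E]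
    {ρ γ : Measure E} [IsFiniteMeasure ρ] [IsGaussian γ]
    (hkl : InformationTheory.klDiv ρ γ ≠ ∞) : MemLp id 2 ρ := by
  obtain ⟨C, hC, hexp⟩ := IsGaussian.exists_integrable_exp_sq γ
  rw [memLp_two_iff_integrable_sq_norm aestronglyMeasurable_id]
  have hsq : Integrable (fun x ↦ C * ‖x‖ ^ 2) ρ :=
    integrable_of_integrable_exp (by fun_prop) (fun x ↦ by positivity) hexp hkl
  exact (hsq.div_const C).congr (ae_of_all _ fun x ↦ mul_div_cancel_left₀ _ hC.ne')

end RadonNikodym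

section RealGaussian

open ProbabilityTheory hiding stdGaussian
open Set Filter Topology
open scoped NNReal

variable {a : ℝ} {v : ℝ≥0}

lemma hasDerivAt_gaussianPDFReal (a : ℝ) (v : ℝ≥0) (x : ℝ) :
    HasDerivAt (gaussianPDFReal a v) (-((x - a) / v * gaussianPDFReal a v x)) x := by
  have hexponent : HasDerivAt (fun x : ℝ ↦ -(x - a) ^ 2 / (2 * v)) (-((x - a) / v)) x := by
    refine ((((hasDerivAt_id x).sub_const a).pow 2).neg.div_const (2 * (v : ℝ))).congr_deriv ?_
    simp only [id, Nat.cast_ofNat]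
    ring
  refine (hexponent.exp.const_mul (√(2 * Real.pi * v))⁻¹).congr_deriv ?_
  rw [gaussianPDFReal]
  ring

lemma setIntegral_Ioi_sub_gaussianReal (a : ℝ) (hv : v ≠ 0) (z : ℝ) :
    ∫ x in Ioi z, (x - a) ∂gaussianReal a v = v * gaussianPDFReal a v z := by
  have hv' : (v : ℝ) ≠ 0 := by exact_mod_cast hv
  have hint : Integrable fun x : ℝ ↦ (x - a) / v * gaussianPDFReal a v x := by
    have h : Integrable (fun x : ℝ ↦ (x - a) / v) (gaussianReal a v) :=
      (((memLp_id_gaussianReal 1).integrable le_rfl).sub (integrable_const a)).div_const _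
    rw [gaussianReal_of_var_ne_zero _ hv, integrable_withDensity_iff
      (measurable_gaussianPDF _ _) (ae_of_all _ fun _ ↦ gaussianPDF_lt_top)] at h
    simpa only [toReal_gaussianPDF] using h
  have hlim : Tendsto (gaussianPDFReal a v) atTop (𝓝 0) :=
    tendsto_zero_of_hasDerivAt_of_integrableOn_Ioi (a := z)
      (fun x _ ↦ hasDerivAt_gaussianPDFReal a v x) hint.neg.integrableOn
      (integrable_gaussianPDFReal a v).integrableOn
  have hFTC := integral_Ioi_of_hasDerivAt_of_tendsto' (a := z)
    (fun x _ ↦ hasDerivAt_gaussianPDFReal a v x) hint.neg.integrableOn hlim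
  rw [integral_neg, zero_sub, neg_inj] at hFTC
  rw [← hFTC, ← integral_const_mul, gaussianReal_of_var_ne_zero _ hv,
    setIntegral_withDensity_eq_setIntegral_toReal_smul (measurable_gaussianPDF _ _)
      (ae_of_all _ fun _ ↦ gaussianPDF_lt_top) _ measurableSet_Ioi]
  refine integral_congr_ae (ae_of_all _ fun x ↦ ?_)
  simp only [toReal_gaussianPDF, smul_eq_mul]
  field_simp

lemma log_gaussianPDFReal_div (hv : v ≠ 0) (x y : ℝ) :
    Real.log (gaussianPDFReal a v x / gaussianPDFReal a v y) =
      ((y - a) ^ 2 - (x - a) ^ 2) / (2 * v) := by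
  have hc : (√(2 * Real.pi * v))⁻¹ ≠ 0 := by positivity
  rw [gaussianPDFReal, gaussianPDFReal, mul_div_mul_left _ _ hc, ← Real.exp_sub, Real.log_exp]
  ring

lemma integral_sub_sq_gaussianReal (a : ℝ) (v : ℝ≥0) :
    ∫ x, (x - a) ^ 2 ∂gaussianReal a v = v := by
  have h := variance_id_gaussianReal (μ := a) (v := v)
  simpa only [variance_eq_integral measurable_id.aemeasurable, id, integral_id_gaussianReal] using h

lemma rnDeriv_volume_ae_eq_mul_gaussianPDF {ρ : Measure ℝ} [SigmaFinite ρ] (hv : v ≠ 0)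
    (hac : ρ ≪ gaussianReal a v) :
    ∀ᵐ y ∂ρ, (ρ.rnDeriv volume y).toReal =
      (ρ.rnDeriv (gaussianReal a v) y).toReal * gaussianPDFReal a v y := by
  have hvol := hac.trans (gaussianReal_absolutelyContinuous a hv)
  filter_upwards [hvol.ae_le (Measure.rnDeriv_mul_rnDeriv (κ := volume) hac),
    hvol.ae_le (rnDeriv_gaussianReal a v)] with y hy hy'
  rw [← hy, Pi.mul_apply, hy', ENNReal.toReal_mul, toReal_gaussianPDF]

/-- The tail integral `∫_{t > s} (T t - a) dρ` of the increasing rearrangement `T` of `ρ` onto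
`gaussianReal a v`. At `ρ`-almost every `s` it is `v` times the Gaussian density at `T s`, and so
is `v / T' s` times the density of `ρ`; this stands in for the derivative of `T`. -/
def rearrangementTail (ρ : Measure ℝ) (a : ℝ) (v : ℝ≥0) (s : ℝ) : ℝ :=
  ∫ t in Ioi s, (monotoneRearrangement ρ (gaussianReal a v) t - a) ∂ρ

section Rearrangement

variable {ρ : Measure ℝ} [IsProbabilityMeasure ρ] [NullSingletonClass ρ]

lemma rearrangementTail_eq (hv : v ≠ 0) {s : ℝ} (hs : cdf ρ s ∈ Ioo (0 : ℝ) 1) :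
    rearrangementTail ρ a v s =
      v * gaussianPDFReal a v (monotoneRearrangement ρ (gaussianReal a v) s) := by
  have := nullSingletonClass_gaussianReal (μ := a) hv
  rw [rearrangementTail, setIntegral_Ioi_comp_monotoneRearrangement (g := fun x ↦ x - a)
    (by fun_prop) hs, setIntegral_Ioi_sub_gaussianReal a hv]

lemma memLp_monotoneRearrangement_sub :
    MemLp (fun y ↦ monotoneRearrangement ρ (gaussianReal a v) y - a) 2 ρ :=
  ((memLp_id_gaussianReal 2).comp_measurePreserving
    (measurePreserving_monotoneRearrangement ρ _)).sub (memLp_const a)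

lemma memLp_monotoneRearrangement_sub_id (hsq : MemLp id 2 ρ) :
    MemLp (fun y ↦ monotoneRearrangement ρ (gaussianReal a v) y - y) 2 ρ :=
  ((memLp_id_gaussianReal 2).comp_measurePreserving
    (measurePreserving_monotoneRearrangement ρ _)).sub hsq

lemma integral_monotoneRearrangement_sub :
    ∫ y, (monotoneRearrangement ρ (gaussianReal a v) y - a) ∂ρ = 0 := by
  have hid : Integrable (fun x : ℝ ↦ x) (gaussianReal a v) :=
    (memLp_id_gaussianReal 1).integrable le_rfl
  rw [integral_comp_monotoneRearrangement (g := fun x ↦ x - a) (by fun_prop),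
    integral_sub hid (integrable_const a),
    integral_id_gaussianReal, integral_const, probReal_univ, one_smul, sub_self]

lemma integral_monotoneRearrangement_sub_sq :
    ∫ y, (monotoneRearrangement ρ (gaussianReal a v) y - a) ^ 2 ∂ρ = v := by
  rw [integral_comp_monotoneRearrangement (g := fun x ↦ (x - a) ^ 2) (by fun_prop),
    integral_sub_sq_gaussianReal]

lemma rearrangementTail_nonneg (hv : v ≠ 0) : 0 ≤ rearrangementTail ρ a v := by
  intro s
  by_cases hs : cdf ρ s ∈ Ioo (0 : ℝ) 1
  · rw [rearrangementTail_eq hv hs]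
    exact mul_nonneg v.2 (gaussianPDFReal_nonneg _ _ _)
  · exact (setIntegral_Ioi_eq_zero_of_cdf_notMem_Ioo integral_monotoneRearrangement_sub hs).ge

/-- `log r ≤ r - 1` at `r = 1 / T' y`, where `T` is the rearrangement. -/
lemma ae_sub_sq_div_le_llr_add (hv : v ≠ 0) (hac : ρ ≪ gaussianReal a v) :
    ∀ᵐ y ∂ρ, (monotoneRearrangement ρ (gaussianReal a v) y - y) ^ 2 / (2 * v) ≤
      llr ρ (gaussianReal a v) y +
        (rearrangementTail ρ a v y / (ρ.rnDeriv volume y).toReal -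
          (y - a) * (monotoneRearrangement ρ (gaussianReal a v) y - a)) / v +
        ((monotoneRearrangement ρ (gaussianReal a v) y - a) ^ 2 / v - 1) := by
  filter_upwards [ae_cdf_mem_Ioo ρ, rnDeriv_volume_ae_eq_mul_gaussianPDF hv hac,
    Measure.rnDeriv_pos hac, hac.ae_le (Measure.rnDeriv_ne_top ρ (gaussianReal a v))]
    with y hy hq hpos htop
  have hf : 0 < (ρ.rnDeriv (gaussianReal a v) y).toReal := ENNReal.toReal_pos hpos.ne' htop
  rw [rearrangementTail_eq hv hy, hq, llr]
  set f := (ρ.rnDeriv (gaussianReal a v) y).toReal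
  set z := monotoneRearrangement ρ (gaussianReal a v) y
  have hφz := gaussianPDFReal_pos a v z hv
  have hφy := gaussianPDFReal_pos a v y hv
  have hlog := Real.log_le_sub_one_of_pos (div_pos (div_pos hφz hφy) hf)
  rw [Real.log_div (div_pos hφz hφy).ne' hf.ne', log_gaussianPDFReal_div hv] at hlog
  have htail : v * gaussianPDFReal a v z / (f * gaussianPDFReal a v y) =
      v * (gaussianPDFReal a v z / gaussianPDFReal a v y / f) := by field_simp
  calc (z - y) ^ 2 / (2 * v)
      = ((y - a) ^ 2 - (z - a) ^ 2) / (2 * v) - (y - a) * (z - a) / v + (z - a) ^ 2 / v := by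
        field_simp
        ring
    _ ≤ (gaussianPDFReal a v z / gaussianPDFReal a v y / f - 1 + Real.log f)
          - (y - a) * (z - a) / v + (z - a) ^ 2 / v := by
        gcongr
        linarith
    _ = _ := by
        rw [htail]
        field_simp
        ring

lemma integrable_id_sub_mul_monotoneRearrangement_sub (hsq : MemLp id 2 ρ) :
    Integrable (fun y ↦ (y - a) * (monotoneRearrangement ρ (gaussianReal a v) y - a)) ρ :=
  (hsq.sub (memLp_const a)).integrable_mul memLp_monotoneRearrangement_sub

lemma integrable_rearrangementTail (hsq : MemLp id 2 ρ) : Integrable (rearrangementTail ρ a v) :=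
  integrable_setIntegral_Ioi (memLp_monotoneRearrangement_sub.integrable one_le_two)
    integral_monotoneRearrangement_sub (integrable_id_sub_mul_monotoneRearrangement_sub hsq)

lemma integral_rearrangementTail (hsq : MemLp id 2 ρ) :
    ∫ s, rearrangementTail ρ a v s =
      ∫ y, (y - a) * (monotoneRearrangement ρ (gaussianReal a v) y - a) ∂ρ :=
  integral_setIntegral_Ioi (memLp_monotoneRearrangement_sub.integrable one_le_two)
    integral_monotoneRearrangement_sub (integrable_id_sub_mul_monotoneRearrangement_sub hsq)

lemma integrable_rearrangementTail_div_sub (hv : v ≠ 0) (hac : ρ ≪ volume) (hsq : MemLp id 2 ρ) :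
    Integrable (fun y ↦ rearrangementTail ρ a v y / (ρ.rnDeriv volume y).toReal -
      (y - a) * (monotoneRearrangement ρ (gaussianReal a v) y - a)) ρ :=
  (integrable_div_rnDeriv hac (rearrangementTail_nonneg hv) (integrable_rearrangementTail hsq)).sub
    (integrable_id_sub_mul_monotoneRearrangement_sub hsq)

lemma integral_rearrangementTail_div_sub_nonpos (hv : v ≠ 0) (hac : ρ ≪ volume)
    (hsq : MemLp id 2 ρ) :
    ∫ y, (rearrangementTail ρ a v y / (ρ.rnDeriv volume y).toReal -
      (y - a) * (monotoneRearrangement ρ (gaussianReal a v) y - a)) ∂ρ ≤ 0 := by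
  have hnonneg : 0 ≤ rearrangementTail ρ a v := rearrangementTail_nonneg hv
  have hint : Integrable (rearrangementTail ρ a v) := integrable_rearrangementTail hsq
  rw [integral_sub (integrable_div_rnDeriv hac hnonneg hint)
    (integrable_id_sub_mul_monotoneRearrangement_sub hsq), ← integral_rearrangementTail hsq]
  exact sub_nonpos.2 (integral_div_rnDeriv_le hac hnonneg hint)

lemma integral_sub_sq_div_le_integral_llr (hv : v ≠ 0) (hac : ρ ≪ gaussianReal a v)
    (hllr : Integrable (llr ρ (gaussianReal a v)) ρ) (hsq : MemLp id 2 ρ) :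
    ∫ y, (monotoneRearrangement ρ (gaussianReal a v) y - y) ^ 2 / (2 * v) ∂ρ ≤
      ∫ y, llr ρ (gaussianReal a v) y ∂ρ := by
  have hac' : ρ ≪ volume := hac.trans (gaussianReal_absolutelyContinuous a hv)
  set T := monotoneRearrangement ρ (gaussianReal a v)
  set D : ℝ → ℝ := fun y ↦
    rearrangementTail ρ a v y / (ρ.rnDeriv volume y).toReal - (y - a) * (T y - a)
  have hD : Integrable (fun y ↦ D y / v) ρ :=
    (integrable_rearrangementTail_div_sub hv hac' hsq).div_const _
  have hsqT : Integrable (fun y ↦ (T y - a) ^ 2 / v) ρ :=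
    memLp_monotoneRearrangement_sub.integrable_sq.div_const _
  have hvar : Integrable (fun y ↦ (T y - a) ^ 2 / v - 1) ρ := hsqT.sub (integrable_const 1)
  have hsum : Integrable (fun y ↦ llr ρ (gaussianReal a v) y + D y / v) ρ := hllr.add hD
  calc ∫ y, (T y - y) ^ 2 / (2 * v) ∂ρ
      ≤ ∫ y, (llr ρ (gaussianReal a v) y + D y / v + ((T y - a) ^ 2 / v - 1)) ∂ρ :=
        integral_mono_ae ((memLp_monotoneRearrangement_sub_id hsq).integrable_sq.div_const _)
          (hsum.add hvar) (ae_sub_sq_div_le_llr_add hv hac)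
    _ = ∫ y, llr ρ (gaussianReal a v) y ∂ρ + (∫ y, D y ∂ρ) / v + (v / v - 1) := by
        rw [integral_add hsum hvar, integral_add hllr hD, integral_div,
          integral_sub hsqT (integrable_const 1), integral_div,
          integral_monotoneRearrangement_sub_sq, integral_const, probReal_univ, one_smul]
    _ ≤ ∫ y, llr ρ (gaussianReal a v) y ∂ρ := by
        rw [div_self (NNReal.coe_ne_zero.2 hv), sub_self, add_zero, add_le_iff_nonpos_right]
        exact div_nonpos_of_nonpos_of_nonneg
          (integral_rearrangementTail_div_sub_nonpos hv hac' hsq) v.2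

end Rearrangement

lemma lintegral_sub_sq_div_le_klDiv (ρ : Measure ℝ) [IsProbabilityMeasure ρ] (a : ℝ) (hv : v ≠ 0) :
    ∫⁻ y, ENNReal.ofReal ((monotoneRearrangement ρ (gaussianReal a v) y - y) ^ 2 / (2 * v)) ∂ρ ≤
      InformationTheory.klDiv ρ (gaussianReal a v) := by
  by_cases hkl : InformationTheory.klDiv ρ (gaussianReal a v) = ∞
  · exact le_top.trans_eq hkl.symm
  obtain ⟨hac, hllr⟩ := InformationTheory.klDiv_ne_top_iff.1 hkl
  have := nullSingletonClass_gaussianReal (μ := a) hv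
  have : NullSingletonClass ρ := ⟨fun x ↦ hac (measure_singleton x)⟩
  have hsq : MemLp id 2 ρ := memLp_id_two_of_klDiv_ne_top hkl
  have hint : Integrable
      (fun y ↦ (monotoneRearrangement ρ (gaussianReal a v) y - y) ^ 2 / (2 * v)) ρ :=
    (memLp_monotoneRearrangement_sub_id hsq).integrable_sq.div_const _
  rw [← ofReal_integral_eq_lintegral_ofReal hint (ae_of_all _ fun y ↦ by positivity),
    InformationTheory.klDiv_of_ac_of_integrable hac hllr, probReal_univ, probReal_univ,
    add_sub_cancel_right]
  exact ENNReal.ofReal_le_ofReal (integral_sub_sq_div_le_integral_llr hv hac hllr hsq)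

end RealGaussian

section ChainRule

open ProbabilityTheory hiding stdGaussian

variable {X Y : Type*} {mX : MeasurableSpace X} {mY : MeasurableSpace Y}

section FiniteKernel

variable [MeasurableSpace.CountableOrCountablyGenerated X Y]
  {κ η : Kernel X Y} [IsFiniteKernel κ] [IsFiniteKernel η]

lemma rnDeriv_compProd_right_ae_eq {μ : Measure X} [IsFiniteMeasure μ]
    (hac : ∀ᵐ a ∂μ, κ a ≪ η a) :
    (μ ⊗ₘ κ).rnDeriv (μ ⊗ₘ η) =ᵐ[μ ⊗ₘ η] fun p ↦ κ.rnDeriv η p.1 p.2 := by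
  have hdensity : μ ⊗ₘ κ = (μ ⊗ₘ η).withDensity fun p ↦ κ.rnDeriv η p.1 p.2 := by
    rw [← Measure.compProd_withDensity (Kernel.measurable_rnDeriv κ η)]
    refine Measure.compProd_congr ?_
    filter_upwards [hac] with a ha
    exact (Kernel.withDensity_rnDeriv_eq ha).symm
  rw [hdensity]
  exact Measure.rnDeriv_withDensity _ (Kernel.measurable_rnDeriv κ η)

lemma klDiv_compProd_right_of_ac {μ : Measure X} [IsFiniteMeasure μ]
    (hac : ∀ᵐ a ∂μ, κ a ≪ η a) :
    InformationTheory.klDiv (μ ⊗ₘ κ) (μ ⊗ₘ η) =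
      ∫⁻ a, InformationTheory.klDiv (κ a) (η a) ∂μ := by
  have hmeas : Measurable fun p : X × Y ↦
      ENNReal.ofReal (InformationTheory.klFun (κ.rnDeriv η p.1 p.2).toReal) :=
    (InformationTheory.measurable_klFun.comp
      (Kernel.measurable_rnDeriv κ η).ennreal_toReal).ennreal_ofReal
  calc InformationTheory.klDiv (μ ⊗ₘ κ) (μ ⊗ₘ η)
      = ∫⁻ p, ENNReal.ofReal (InformationTheory.klFun (κ.rnDeriv η p.1 p.2).toReal)
          ∂(μ ⊗ₘ η) := by
        rw [InformationTheory.klDiv_eq_lintegral_klFun_of_ac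
          (Measure.absolutelyContinuous_compProd_right_iff.2 hac)]
        refine lintegral_congr_ae ?_
        filter_upwards [rnDeriv_compProd_right_ae_eq hac] with p hp
        rw [hp]
    _ = ∫⁻ a, ∫⁻ b, ENNReal.ofReal (InformationTheory.klFun (κ.rnDeriv η a b).toReal)
          ∂(η a) ∂μ := Measure.lintegral_compProd hmeas
    _ = ∫⁻ a, InformationTheory.klDiv (κ a) (η a) ∂μ := by
        refine lintegral_congr_ae ?_
        filter_upwards [hac] with a ha
        rw [InformationTheory.klDiv_eq_lintegral_klFun_of_ac ha]
        refine lintegral_congr_ae ?_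
        filter_upwards [Kernel.rnDeriv_eq_rnDeriv_measure (κ := κ) (η := η) (a := a)] with b hb
        rw [hb]

variable (κ η) in
lemma klDiv_compProd_right_eq_lintegral (μ : Measure X) [IsFiniteMeasure μ] :
    InformationTheory.klDiv (μ ⊗ₘ κ) (μ ⊗ₘ η) =
      ∫⁻ a, InformationTheory.klDiv (κ a) (η a) ∂μ := by
  by_cases hac : ∀ᵐ a ∂μ, κ a ≪ η a
  · exact klDiv_compProd_right_of_ac hac
  rw [InformationTheory.klDiv_of_not_ac (mt Measure.absolutelyContinuous_compProd_right_iff.1 hac)]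
  have hpos : μ {a | κ a ≪ η a}ᶜ ≠ 0 := fun h ↦ hac h
  refine (top_le_iff.1 ?_).symm
  calc ∞ = ∫⁻ _ in {a | κ a ≪ η a}ᶜ, ∞ ∂μ := by
        rw [setLIntegral_const, ENNReal.top_mul hpos]
    _ = ∫⁻ a in {a | κ a ≪ η a}ᶜ, InformationTheory.klDiv (κ a) (η a) ∂μ :=
        setLIntegral_congr_fun (Kernel.measurableSet_absolutelyContinuous κ η).compl
          fun _ ha ↦ (InformationTheory.klDiv_of_not_ac ha).symm
    _ ≤ ∫⁻ a, InformationTheory.klDiv (κ a) (η a) ∂μ := setLIntegral_le_lintegral _ _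

end FiniteKernel

lemma klDiv_compProd_eq_add_lintegral [MeasurableSpace.CountableOrCountablyGenerated X Y]
    (μ ν : Measure X) [IsFiniteMeasure μ] [IsFiniteMeasure ν]
    (κ η : Kernel X Y) [IsMarkovKernel κ] [IsMarkovKernel η] :
    InformationTheory.klDiv (μ ⊗ₘ κ) (ν ⊗ₘ η) =
      InformationTheory.klDiv μ ν + ∫⁻ a, InformationTheory.klDiv (κ a) (η a) ∂μ := by
  rw [InformationTheory.klDiv_compProd_eq_add, klDiv_compProd_right_eq_lintegral]

section Disintegration

variable [StandardBorelSpace Y] [Nonempty Y] {ν : Measure (X × Y)} [IsFiniteMeasure ν]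
  {μ : Measure X} {η : Kernel X Y}

lemma ae_condKernel_absolutelyContinuous [IsFiniteKernel η] (hac : ν ≪ μ ⊗ₘ η) :
    ∀ᵐ x ∂ν.fst, ν.condKernel x ≪ η x := by
  rw [← ν.disintegrate ν.condKernel] at hac
  exact hac.kernel_of_compProd

variable (ν μ η) in
lemma klDiv_eq_klDiv_fst_add_lintegral_condKernel [IsFiniteMeasure μ] [IsMarkovKernel η] :
    InformationTheory.klDiv ν (μ ⊗ₘ η) =
      InformationTheory.klDiv ν.fst μ +
        ∫⁻ x, InformationTheory.klDiv (ν.condKernel x) (η x) ∂ν.fst := by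
  rw [← klDiv_compProd_eq_add_lintegral, ν.disintegrate ν.condKernel]

end Disintegration

end ChainRule

section TransportEntropy

open ProbabilityTheory hiding stdGaussian

variable {X X' Y Y' : Type*} {mX : MeasurableSpace X} {mX' : MeasurableSpace X'}
  {mY : MeasurableSpace Y} {mY' : MeasurableSpace Y'}

lemma map_prodMap_compProd {μ : Measure X} [SFinite μ] {κ : Kernel X Y} [IsSFiniteKernel κ]
    {κ' : Kernel X' Y'} [IsSFiniteKernel κ'] {f : X → X'} {g : Y → Y'} (hf : Measurable f)
    (hg : Measurable g) (h : ∀ᵐ x ∂μ, (κ x).map g = κ' (f x)) :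
    (μ ⊗ₘ κ).map (Prod.map f g) = μ.map f ⊗ₘ κ' := by
  refine Measure.ext_of_lintegral _ fun F hF ↦ ?_
  rw [lintegral_map hF (hf.prodMap hg),
    Measure.lintegral_compProd (f := fun p ↦ F (Prod.map f g p)) (hF.comp (hf.prodMap hg)),
    Measure.lintegral_compProd hF, lintegral_map hF.lintegral_kernel_prod_right' hf]
  refine lintegral_congr_ae ?_
  filter_upwards [h] with x hx
  rw [← hx, lintegral_map (f := fun y ↦ F (f x, y)) (hF.comp measurable_prodMk_left) hg]
  rfl

lemma measurable_prodProdProdComm : Measurable (Equiv.prodProdProdComm X X' Y Y') :=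
  (measurable_fst.fst.prodMk measurable_snd.fst).prodMk
    (measurable_fst.snd.prodMk measurable_snd.snd)

lemma lintegral_map_prodProdProdComm_compProd {π : Measure (X × X')} [SFinite π]
    {L : Kernel (X × X') (Y × Y')} [IsMarkovKernel L] {c : X × X' → ℝ≥0∞} (hc : Measurable c)
    {c' : Y × Y' → ℝ≥0∞} (hc' : Measurable c') :
    ∫⁻ p, c (p.1.1, p.2.1) + c' (p.1.2, p.2.2) ∂(π ⊗ₘ L).map (Equiv.prodProdProdComm X X' Y Y') =
      ∫⁻ q, c q ∂π + ∫⁻ q, ∫⁻ w, c' w ∂(L q) ∂π := by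
  rw [lintegral_map (by fun_prop) measurable_prodProdProdComm]
  simp only [Equiv.prodProdProdComm_apply, Prod.mk.eta]
  rw [Measure.lintegral_compProd (f := fun p ↦ c p.1 + c' p.2) (by fun_prop),
    ← lintegral_add_left hc]
  refine lintegral_congr fun q ↦ ?_
  rw [lintegral_add_left (f := fun _ ↦ c q) measurable_const, lintegral_const, measure_univ,
    mul_one]

/-- `π` is a transport plan from `μ` to `ν`, that is, a coupling of them. -/
structure IsTransportPlan (π : Measure (X × Y)) (μ : Measure X) (ν : Measure Y) : Prop where
  fst_eq : π.fst = μ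
  snd_eq : π.snd = ν

namespace IsTransportPlan

variable {μ : Measure X} {μ' : Measure X'} {π : Measure (X × X')}

lemma prod (μ : Measure X) (ν : Measure Y) [IsProbabilityMeasure μ] [IsProbabilityMeasure ν] :
    IsTransportPlan (μ.prod ν) μ ν :=
  ⟨Measure.fst_prod, Measure.snd_prod⟩

lemma isProbabilityMeasure [IsProbabilityMeasure μ] (h : IsTransportPlan π μ μ') :
    IsProbabilityMeasure π :=
  ⟨by rw [← Measure.fst_univ, h.fst_eq, measure_univ]⟩

lemma map (h : IsTransportPlan π μ μ') {f : X → Y} {g : X' → Y'} (hf : Measurable f)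
    (hg : Measurable g) : IsTransportPlan (π.map (Prod.map f g)) (μ.map f) (μ'.map g) where
  fst_eq := by
    rw [← h.fst_eq, Measure.fst, Measure.fst, Measure.map_map measurable_fst (hf.prodMap hg),
      Measure.map_map hf measurable_fst]
    rfl
  snd_eq := by
    rw [← h.snd_eq, Measure.snd, Measure.snd, Measure.map_map measurable_snd (hf.prodMap hg),
      Measure.map_map hg measurable_snd]
    rfl

lemma compProd [SFinite π] (h : IsTransportPlan π μ μ') {κ : Kernel X Y} [IsSFiniteKernel κ]
    {κ' : Kernel X' Y'} [IsSFiniteKernel κ'] {L : Kernel (X × X') (Y × Y')} [IsSFiniteKernel L]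
    (hL : ∀ᵐ q ∂π, IsTransportPlan (L q) (κ q.1) (κ' q.2)) :
    IsTransportPlan ((π ⊗ₘ L).map (Equiv.prodProdProdComm X X' Y Y')) (μ ⊗ₘ κ) (μ' ⊗ₘ κ') := by
  constructor
  · rw [← h.fst_eq, Measure.fst, Measure.map_map measurable_fst measurable_prodProdProdComm]
    exact map_prodMap_compProd measurable_fst measurable_fst (hL.mono fun q hq ↦ hq.fst_eq)
  · rw [← h.snd_eq, Measure.snd, Measure.map_map measurable_snd measurable_prodProdProdComm]
    exact map_prodMap_compProd measurable_snd measurable_snd (hL.mono fun q hq ↦ hq.snd_eq)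

end IsTransportPlan

/-- The transport-entropy inequality for the reference measure `m` and the cost `c`: the optimal
transport cost from `m` to any probability measure is at most its relative entropy. It asks for a
plan within the bound, not only for the infimum over the plans to be. -/
def TransportEntropyInequality (m : Measure X) (c : X × X → ℝ≥0∞) : Prop :=
  ∀ (ν : Measure X) [IsProbabilityMeasure ν], ∃ π, IsTransportPlan π m ν ∧
    ∫⁻ p, c p ∂π ≤ InformationTheory.klDiv ν m

/-- The transport-entropy inequality with transport plans that depend measurably on the target
measure. Nothing is asked at targets that are not absolutely continuous, as their relative entropy
is infinite. -/
def MeasurableTransportEntropyInequality (m : Measure X) (c : X × X → ℝ≥0∞) : Prop :=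
  ∃ K : Kernel (ProbabilityMeasure X) (X × X), IsMarkovKernel K ∧
    ∀ ν : ProbabilityMeasure X, (ν : Measure X) ≪ m →
      IsTransportPlan (K ν) m ν ∧ ∫⁻ p, c p ∂(K ν) ≤ InformationTheory.klDiv ν m

lemma MeasurableTransportEntropyInequality.exists_kernel {m : Measure Y} {c : Y × Y → ℝ≥0∞}
    (h : MeasurableTransportEntropyInequality m c) (κ : Kernel X Y) [IsMarkovKernel κ] :
    ∃ L : Kernel X (Y × Y), IsMarkovKernel L ∧ ∀ x, κ x ≪ m →
      IsTransportPlan (L x) m (κ x) ∧ ∫⁻ p, c p ∂(L x) ≤ InformationTheory.klDiv (κ x) m := by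
  obtain ⟨K, _, hK⟩ := h
  exact ⟨K.comap (fun x ↦ ⟨κ x, inferInstance⟩) κ.measurable.subtype_mk,
    Kernel.IsMarkovKernel.comap K _, fun x ↦ hK ⟨κ x, inferInstance⟩⟩

lemma measurableTransportEntropyInequality_gaussianReal (a : ℝ) {v : NNReal} (hv : v ≠ 0) :
    MeasurableTransportEntropyInequality (gaussianReal a v)
      fun p ↦ ENNReal.ofReal ((p.1 - p.2) ^ 2 / (2 * v)) := by
  let eval : Kernel (ProbabilityMeasure ℝ) ℝ := ⟨Subtype.val, measurable_subtype_coe⟩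
  have : IsMarkovKernel eval := ⟨fun ν ↦ ν.2⟩
  let graph : ProbabilityMeasure ℝ × ℝ → ℝ × ℝ :=
    fun p ↦ (monotoneRearrangement p.1 (gaussianReal a v) p.2, p.2)
  have hgraph : Measurable graph :=
    (measurable_monotoneRearrangement_kernel eval _).prodMk measurable_snd
  let K : Kernel (ProbabilityMeasure ℝ) (ℝ × ℝ) := (Kernel.id ×ₖ eval).map graph
  have hK (ν : ProbabilityMeasure ℝ) :
      K ν = (ν : Measure ℝ).map fun y ↦ (monotoneRearrangement ν (gaussianReal a v) y, y) := by
    rw [Kernel.map_apply _ hgraph, Kernel.prod_apply, Kernel.id_apply, Measure.dirac_prod,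
      Measure.map_map hgraph measurable_prodMk_left]
    rfl
  refine ⟨K, Kernel.IsMarkovKernel.map _ hgraph, fun ν hac ↦ ?_⟩
  have := nullSingletonClass_gaussianReal (μ := a) hv
  have : NullSingletonClass (ν : Measure ℝ) := ⟨fun x ↦ hac (measure_singleton x)⟩
  have hT := measurePreserving_monotoneRearrangement (ν : Measure ℝ) (gaussianReal a v)
  rw [hK]
  refine ⟨⟨?_, ?_⟩, ?_⟩
  · rw [Measure.fst_map_prodMk measurable_id', hT.map_eq]
  · rw [Measure.snd_map_prodMk hT.measurable, Measure.map_id']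
  · rw [lintegral_map (by fun_prop) (hT.measurable.prodMk measurable_id')]
    exact lintegral_sub_sq_div_le_klDiv ν a hv

lemma transportEntropyInequality_zero (m : Measure X) [IsProbabilityMeasure m] :
    TransportEntropyInequality m 0 :=
  fun ν _ ↦ ⟨m.prod ν, .prod m ν, by simp⟩

namespace TransportEntropyInequality

variable {m : Measure X} [IsProbabilityMeasure m] {c : X × X → ℝ≥0∞}

lemma map_equiv (h : TransportEntropyInequality m c) (e : X ≃ᵐ Y) {c' : Y × Y → ℝ≥0∞}
    (hc' : Measurable c') (hcc' : ∀ p, c' (Prod.map e e p) = c p) :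
    TransportEntropyInequality (m.map e) c' := by
  intro ν _
  have : IsProbabilityMeasure (ν.map e.symm) :=
    Measure.isProbabilityMeasure_map e.symm.measurable.aemeasurable
  obtain ⟨π, hπ, hcost⟩ := h (ν.map e.symm)
  refine ⟨π.map (Prod.map e e), ?_, ?_⟩
  · simpa only [MeasurableEquiv.map_map_symm] using hπ.map e.measurable e.measurable
  calc ∫⁻ p, c' p ∂π.map (Prod.map e e) = ∫⁻ p, c p ∂π := by
        rw [lintegral_map hc' (e.measurable.prodMap e.measurable)]
        exact lintegral_congr hcc'
    _ ≤ InformationTheory.klDiv (ν.map e.symm) ((m.map e).map e.symm) := by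
        rwa [MeasurableEquiv.map_symm_map]
    _ ≤ InformationTheory.klDiv ν (m.map e) :=
        InformationTheory.klDiv_map_le _ _ e.symm.measurable

/-- Transport the first marginals by the first inequality, and then, over each pair of points that
this matches, transport `m'` to the conditional law of the target by the second one. -/
lemma prod [StandardBorelSpace Y] {m' : Measure Y} [IsProbabilityMeasure m']
    {c' : Y × Y → ℝ≥0∞} (h : TransportEntropyInequality m c) (hc : Measurable c)
    (h' : MeasurableTransportEntropyInequality m' c') (hc' : Measurable c') :
    TransportEntropyInequality (m.prod m')
      fun p ↦ c (p.1.1, p.2.1) + c' (p.1.2, p.2.2) := by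
  intro ν _
  by_cases hac : ν ≪ m.prod m'
  case neg =>
    exact ⟨(m.prod m').prod ν, .prod _ _,
      le_top.trans_eq (InformationTheory.klDiv_of_not_ac hac).symm⟩
  have := nonempty_of_isProbabilityMeasure m'
  rw [← Measure.compProd_const] at hac ⊢
  have hac' : ∀ᵐ x ∂ν.fst, ν.condKernel x ≪ m' := ae_condKernel_absolutelyContinuous hac
  obtain ⟨π, hπ, hcost⟩ := h ν.fst
  obtain ⟨L, _, hL⟩ := h'.exists_kernel ν.condKernel
  have := hπ.isProbabilityMeasure
  have hplan : ∀ᵐ q ∂π, IsTransportPlan (L.prodMkLeft X q) m' (ν.condKernel q.2) := by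
    rw [← hπ.snd_eq] at hac'
    filter_upwards [ae_of_ae_map measurable_snd.aemeasurable hac'] with q hq
    exact (hL q.2 hq).1
  refine ⟨(π ⊗ₘ L.prodMkLeft X).map (Equiv.prodProdProdComm X X Y Y), ?_, ?_⟩
  · simpa only [ν.disintegrate ν.condKernel] using hπ.compProd (κ := Kernel.const X m') hplan
  calc ∫⁻ p, c (p.1.1, p.2.1) + c' (p.1.2, p.2.2)
        ∂(π ⊗ₘ L.prodMkLeft X).map (Equiv.prodProdProdComm X X Y Y)
      = ∫⁻ q, c q ∂π + ∫⁻ x, ∫⁻ w, c' w ∂(L x) ∂ν.fst := by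
        rw [lintegral_map_prodProdProdComm_compProd hc hc', ← hπ.snd_eq, Measure.snd,
          lintegral_map hc'.lintegral_kernel measurable_snd]
        rfl
    _ ≤ InformationTheory.klDiv ν (m ⊗ₘ Kernel.const X m') := by
        rw [klDiv_eq_klDiv_fst_add_lintegral_condKernel]
        exact add_le_add hcost (lintegral_mono_ae (hac'.mono fun x hx ↦ (hL x hx).2))

end TransportEntropyInequality

lemma transportEntropyInequality_pi {n : ℕ} {Z : Fin n → Type*} [∀ i, MeasurableSpace (Z i)]
    [∀ i, StandardBorelSpace (Z i)] {m : ∀ i, Measure (Z i)} [∀ i, IsProbabilityMeasure (m i)]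
    {c : ∀ i, Z i × Z i → ℝ≥0∞} (hc : ∀ i, Measurable (c i))
    (h : ∀ i, MeasurableTransportEntropyInequality (m i) (c i)) :
    TransportEntropyInequality (Measure.pi m) fun p ↦ ∑ i, c i (p.1 i, p.2 i) := by
  induction n with
  | zero =>
    convert transportEntropyInequality_zero (Measure.pi m)
    exact Fin.sum_univ_zero _
  | succ n ih =>
    let e := (MeasurableEquiv.piFinSuccAbove Z 0).trans MeasurableEquiv.prodComm
    have he : MeasurePreserving e (Measure.pi m) ((Measure.pi fun i ↦ m (Fin.succ i)).prod (m 0)) :=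
      (measurePreserving_piFinSuccAbove m 0).trans Measure.measurePreserving_swap
    rw [← (he.symm e).map_eq]
    refine ((ih (fun i ↦ hc i.succ) fun i ↦ h i.succ).prod (by fun_prop) (h 0) (hc 0)).map_equiv
      e.symm (by fun_prop) fun p ↦ ?_
    rw [Fin.sum_univ_succ, add_comm]
    rfl

end TransportEntropy

section EuclideanGaussian

open ProbabilityTheory hiding stdGaussian
open scoped RealInnerProductSpace

variable {E : Type*} [NormedAddCommGroup E] [InnerProductSpace ℝ E] [FiniteDimensional ℝ E]
  [MeasurableSpace E] [BorelSpace E]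

variable (E) in
lemma integrable_exp_neg_sq_norm_div_two : Integrable fun x : E ↦ Real.exp (-‖x‖ ^ 2 / 2) := by
  refine (GaussianFourier.integrable_cexp_neg_mul_sq_norm_add (V := E) (b := 1 / 2)
    (by norm_num) 0 0).norm.congr (ae_of_all _ fun x ↦ ?_)
  simp only [Complex.norm_exp, zero_mul, add_zero]
  congr 1
  norm_num [← Complex.ofReal_pow]
  ring

lemma integral_exp_neg_sq_norm_div_two_mul_cexp_inner (t : E) :
    ∫ x : E, (Real.exp (-‖x‖ ^ 2 / 2) : ℂ) * Complex.exp (⟪x, t⟫ * Complex.I) =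
      (2 * Real.pi : ℂ) ^ (Module.finrank ℝ E / 2 : ℂ) * Complex.exp (-‖t‖ ^ 2 / 2) := by
  calc ∫ x : E, (Real.exp (-‖x‖ ^ 2 / 2) : ℂ) * Complex.exp (⟪x, t⟫ * Complex.I)
      = ∫ x : E, Complex.exp (-(1 / 2) * ‖x‖ ^ 2 + Complex.I * ⟪t, x⟫) := by
        refine integral_congr_ae (ae_of_all _ fun x ↦ ?_)
        simp only [Complex.ofReal_exp, ← Complex.exp_add, real_inner_comm t x]
        congr 1
        push_cast
        ring
    _ = (2 * Real.pi : ℂ) ^ (Module.finrank ℝ E / 2 : ℂ) * Complex.exp (-‖t‖ ^ 2 / 2) := by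
        rw [GaussianFourier.integral_cexp_neg_mul_sq_norm_add (by norm_num), Complex.I_sq]
        congr 2 <;> ring

lemma stdGaussian_eq_withDensity : ProbabilityTheory.stdGaussian E = volume.withDensity fun x ↦
    ENNReal.ofReal ((2 * Real.pi) ^ (-(Module.finrank ℝ E : ℝ) / 2) * Real.exp (-‖x‖ ^ 2 / 2)) := by
  set C : ℝ := (2 * Real.pi) ^ (-(Module.finrank ℝ E : ℝ) / 2)
  have hC : (C : ℂ) * (2 * Real.pi : ℂ) ^ (Module.finrank ℝ E / 2 : ℂ) = 1 := by
    have hpow : ((2 * Real.pi) ^ (Module.finrank ℝ E / 2 : ℝ) : ℝ) =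
        (2 * Real.pi : ℂ) ^ (Module.finrank ℝ E / 2 : ℂ) := by
      rw [Complex.ofReal_cpow (by positivity)]
      push_cast
      rfl
    rw [← hpow, ← Complex.ofReal_mul, ← Real.rpow_add (by positivity), neg_div, neg_add_cancel,
      Real.rpow_zero, Complex.ofReal_one]
  have := isFiniteMeasure_withDensity_ofReal
    ((integrable_exp_neg_sq_norm_div_two E).const_mul C).2
  refine Measure.ext_of_charFun (funext fun t ↦ ?_)
  have hcharFun (x : E) : (ENNReal.ofReal (C * Real.exp (-‖x‖ ^ 2 / 2))).toReal •
      Complex.exp (⟪x, t⟫ * Complex.I) =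
        C * (Real.exp (-‖x‖ ^ 2 / 2) * Complex.exp (⟪x, t⟫ * Complex.I)) := by
    rw [ENNReal.toReal_ofReal (by positivity), Complex.real_smul, Complex.ofReal_mul, mul_assoc]
  rw [charFun_stdGaussian, charFun_apply, integral_withDensity_eq_integral_toReal_smul (by fun_prop)
    (ae_of_all _ fun _ ↦ ENNReal.ofReal_lt_top)]
  simp_rw [hcharFun]
  rw [integral_const_mul, integral_exp_neg_sq_norm_div_two_mul_cexp_inner, ← mul_assoc, hC,
    one_mul]

lemma stdGaussian_eq_probabilityTheory_stdGaussian (d : ℕ) :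
    stdGaussian d = ProbabilityTheory.stdGaussian (EuclideanSpace ℝ (Fin d)) := by
  rw [stdGaussian, stdGaussian_eq_withDensity, finrank_euclideanSpace_fin]

lemma klDiv_eq_informationTheory_klDiv {α : Type*} [MeasurableSpace α] (ν μ : Measure α)
    [IsProbabilityMeasure ν] [IsProbabilityMeasure μ] :
    klDiv ν μ = InformationTheory.klDiv ν μ := by
  simp [klDiv, InformationTheory.klDiv]

lemma W2sq_le_transportCost {d : ℕ}
    {π : Measure (EuclideanSpace ℝ (Fin d) × EuclideanSpace ℝ (Fin d))}
    {μ ν : Measure (EuclideanSpace ℝ (Fin d))} [IsProbabilityMeasure μ]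
    (hπ : IsTransportPlan π μ ν) : W2sq μ ν ≤ transportCost π :=
  sInf_le ⟨π, ⟨hπ.isProbabilityMeasure, hπ.fst_eq, hπ.snd_eq⟩, rfl⟩

variable (E) in
lemma transportEntropyInequality_stdGaussian :
    TransportEntropyInequality (ProbabilityTheory.stdGaussian E)
      fun p ↦ ENNReal.ofReal (‖p.1 - p.2‖ ^ 2 / 2) := by
  have hpi := transportEntropyInequality_pi (fun _ : Fin (Module.finrank ℝ E) ↦ by fun_prop)
    fun _ ↦ measurableTransportEntropyInequality_gaussianReal 0 one_ne_zero
  let b := stdOrthonormalBasis ℝ E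
  let e : (Fin (Module.finrank ℝ E) → ℝ) ≃ᵐ E :=
    (MeasurableEquiv.toLp 2 _).trans b.measurableEquiv.symm
  have he : (Measure.pi fun _ ↦ gaussianReal 0 1).map e = ProbabilityTheory.stdGaussian E := by
    rw [← stdGaussian_map b.repr.symm, ← map_pi_eq_stdGaussian,
      Measure.map_map (by fun_prop) (by fun_prop)]
    rfl
  rw [← he]
  refine hpi.map_equiv e (by fun_prop) fun p ↦ ?_
  have hnorm : ‖e p.1 - e p.2‖ ^ 2 = ∑ i, (p.1 i - p.2 i) ^ 2 := by
    rw [← b.repr.norm_map, map_sub, EuclideanSpace.real_norm_sq_eq]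
    simp [e, OrthonormalBasis.measurableEquiv]
  simp only [Prod.map_fst, Prod.map_snd, hnorm, Finset.sum_div, NNReal.coe_one, mul_one]
  exact ENNReal.ofReal_sum_of_nonneg fun i _ ↦ by positivity

theorem talagrand_inequality_gaussian_general (ν : Measure E) [IsProbabilityMeasure ν] :
    ∃ π, IsTransportPlan π (ProbabilityTheory.stdGaussian E) ν ∧
      ∫⁻ p, ENNReal.ofReal (‖p.1 - p.2‖ ^ 2) ∂π ≤
        2 * InformationTheory.klDiv ν (ProbabilityTheory.stdGaussian E) := by
  obtain ⟨π, hπ, hcost⟩ := transportEntropyInequality_stdGaussian E ν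
  refine ⟨π, hπ, ?_⟩
  calc ∫⁻ p, ENNReal.ofReal (‖p.1 - p.2‖ ^ 2) ∂π
      = 2 * ∫⁻ p, ENNReal.ofReal (‖p.1 - p.2‖ ^ 2 / 2) ∂π := by
        rw [← lintegral_const_mul' _ _ ENNReal.ofNat_ne_top]
        refine lintegral_congr fun p ↦ ?_
        rw [← ENNReal.ofReal_ofNat 2, ← ENNReal.ofReal_mul zero_le_two,
          mul_div_cancel₀ _ two_ne_zero]
    _ ≤ 2 * InformationTheory.klDiv ν (ProbabilityTheory.stdGaussian E) := by gcongr

end EuclideanGaussian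

/-- **Talagrand's transportation-cost inequality** for the standard Gaussian:
for any probability measure `ν` with `D_KL(ν‖γ_d) < ∞`, the infimum of the quadratic
transport cost over couplings of `γ_d` and `ν` satisfies
`W₂(γ_d, ν)² ≤ 2 · D_KL(ν‖γ_d)`. -/
theorem talagrand_inequality_gaussian {d : ℕ}
    (ν : Measure (EuclideanSpace ℝ (Fin d))) [IsProbabilityMeasure ν]
    (hKL : klDiv ν (stdGaussian d) < ∞) :
    W2sq (stdGaussian d) ν ≤ 2 * klDiv ν (stdGaussian d) := by
  obtain ⟨π, hπ, hcost⟩ := talagrand_inequality_gaussian_general ν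
  rw [stdGaussian_eq_probabilityTheory_stdGaussian, klDiv_eq_informationTheory_klDiv]
  exact (W2sq_le_transportCost hπ).trans hcost
end
end

section
/- Let ρ > 0 and let π₀ be a probability measure on ℝ^d with density e^{−V} with respect to Lebesgue measure, where V : ℝ^d → ℝ is ρ-strongly convex, i.e. x ↦ V(x) − (ρ/2)‖x‖² is convex. Then for every probability measure ν on ℝ^d with D_KL(ν‖π₀) < ∞, the infimum over all couplings π of π₀ and ν of the quadratic transport cost ∫ ‖x − y‖² dπ(x,y) is at most (2/ρ)·D_KL(ν‖π₀). (Talagrand transportation-cost inequality for log-concave reference measures, the precise form of Theorem 4.3 of the paper.) -/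
open MeasureTheory ENNReal
open scoped Classical

noncomputable section

/-!
The Prékopa–Leindler inequality, with weights `a + b = 1`, applied to `exp (-V + ρ * b / 2 * u)`,
`exp (-V + ρ * a / 2 * w)` and `exp (-V)`, where `u x + w y ≤ ‖x - y‖ ^ 2`, bounds
`a * log ∫ exp (ρ * b / 2 * u) ∂π₀ + b * log ∫ exp (ρ * a / 2 * w) ∂π₀` by `0`: the strong convexity
of `V` pays for the cost `‖x - y‖ ^ 2`. By Gibbs' variational principle the logarithms dominate
`ρ * b / 2 * ∫ u ∂π₀` and `ρ * a / 2 * ∫ w ∂ν - D_KL(ν‖π₀)`. Dividing by `b` and letting `a` tend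
to `1` gives `∫ u ∂π₀ + ∫ w ∂ν ≤ 2 / ρ * D_KL(ν‖π₀)`, the dual form of the theorem.

Kantorovich duality turns this into a coupling. On finite spaces it is a separation of convex sets.
A lower semicontinuous cost on Polish spaces is reduced to that case by coding points as binary
sequences: it is then the supremum of costs depending on finitely many digits, the finite couplings
lift to Cantor space by gluing and, by compactness, one coupling serves all these costs; gluing once
more lifts it to the original spaces.
-/

open Set Filter Topology
open scoped NNReal Pointwise

section BrunnMinkowski

lemma volume_add_le_of_isCompact {K L : Set ℝ} (hK : IsCompact K) (hL : IsCompact L)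
    (hK₀ : K.Nonempty) (hL₀ : L.Nonempty) : volume K + volume L ≤ volume (K + L) := by
  have hdisj : AEDisjoint volume ((· + sInf L) '' K) ((sSup K + ·) '' L) := by
    refine measure_mono_null (t := {sSup K + sInf L}) ?_ (by simp)
    rintro _ ⟨⟨x, hx, rfl⟩, y, hy, hxy⟩
    have hxK := le_csSup hK.bddAbove hx
    have hyL := csInf_le hL.bddBelow hy
    simp only [mem_singleton_iff] at hxy ⊢
    linarith
  have hmeas : NullMeasurableSet ((sSup K + ·) '' L) :=
    (hL.image (by fun_prop)).measurableSet.nullMeasurableSet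
  calc volume K + volume L
      = volume ((· + sInf L) '' K) + volume ((sSup K + ·) '' L) := by
        simp [image_add_left, image_add_right]
    _ = volume ((· + sInf L) '' K ∪ (sSup K + ·) '' L) := (measure_union₀ hmeas hdisj).symm
    _ ≤ volume (K + L) := measure_mono <| union_subset
        (image_subset_iff.2 fun x hx => add_mem_add hx (hL.sInf_mem hL₀))
        (image_subset_iff.2 fun y hy => add_mem_add (hK.sSup_mem hK₀) hy)

lemma volume_add_le {A B : Set ℝ} (hA : MeasurableSet A) (hB : MeasurableSet B)
    (hA₀ : A.Nonempty) (hB₀ : B.Nonempty) : volume A + volume B ≤ volume (A + B) := by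
  obtain ⟨a, ha⟩ := hA₀
  obtain ⟨b, hb⟩ := hB₀
  rw [hA.measure_eq_iSup_isCompact, hB.measure_eq_iSup_isCompact]
  simp only [iSup_and', iSup_subtype']
  have : Nonempty {K : Set ℝ // K ⊆ A ∧ IsCompact K} := ⟨⟨∅, by simp⟩⟩
  have : Nonempty {K : Set ℝ // K ⊆ B ∧ IsCompact K} := ⟨⟨∅, by simp⟩⟩
  refine ENNReal.iSup_add_iSup_le fun ⟨K, hKA, hK⟩ ⟨L, hLB, hL⟩ => ?_
  calc volume K + volume L ≤ volume (insert a K) + volume (insert b L) := by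
        gcongr <;> exact subset_insert _ _
    _ ≤ volume (insert a K + insert b L) :=
        volume_add_le_of_isCompact (hK.insert a) (hL.insert b) ⟨a, by simp⟩ ⟨b, by simp⟩
    _ ≤ volume (A + B) := by
        gcongr
        · exact insert_subset ha hKA
        · exact insert_subset hb hLB

end BrunnMinkowski

section LayerCake

lemma volume_Ioi_zero_inter_ofReal_lt (t : ℝ≥0∞) :
    volume (Ioi (0 : ℝ) ∩ {c | ENNReal.ofReal c < t}) = t := by
  rcases eq_or_ne t ∞ with rfl | ht
  · simp
  · have : Ioi (0 : ℝ) ∩ {c | ENNReal.ofReal c < t} = Ioo 0 t.toReal := by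
      ext c
      exact and_congr_right fun hc => ofReal_lt_iff_lt_toReal (le_of_lt hc) ht
    simp [this, ht]

lemma lintegral_eq_lintegral_measure_ofReal_lt {α : Type*} [MeasurableSpace α] (μ : Measure α)
    [SFinite μ] {f : α → ℝ≥0∞} (hf : Measurable f) :
    ∫⁻ x, f x ∂μ = ∫⁻ c in Ioi (0 : ℝ), μ {x | ENNReal.ofReal c < f x} := by
  have hmeas : MeasurableSet {p : α × ℝ | ENNReal.ofReal p.2 < f p.1} :=
    measurableSet_lt (by fun_prop) (by fun_prop)
  have key : ∀ ν : Measure ℝ, SFinite ν →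
      ∫⁻ x, ν {c | ENNReal.ofReal c < f x} ∂μ = ∫⁻ c, μ {x | ENNReal.ofReal c < f x} ∂ν :=
    fun ν _ => (Measure.prod_apply hmeas).symm.trans (Measure.prod_apply_symm hmeas)
  rw [← key _ inferInstance]
  refine lintegral_congr fun x => ?_
  rw [Measure.restrict_apply (measurableSet_lt (by fun_prop) (by fun_prop)), inter_comm,
    volume_Ioi_zero_inter_ofReal_lt]

end LayerCake

section PrekopaLeindler

/-- The Prékopa–Leindler inequality for the measure `μ`: the functional form of the
Brunn–Minkowski inequality, with exponents `a` and `b` of sum `1`. -/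
def PrekopaLeindler {E : Type*} [AddCommGroup E] [Module ℝ E] [MeasurableSpace E]
    (μ : Measure E) : Prop :=
  ∀ ⦃a b : ℝ⦄, 0 < a → 0 < b → a + b = 1 →
    ∀ ⦃f g h : E → ℝ≥0∞⦄, Measurable f → Measurable g → Measurable h →
      (∀ x y, f x ^ a * g y ^ b ≤ h (a • x + b • y)) →
      (∫⁻ x, f x ∂μ) ^ a * (∫⁻ x, g x ∂μ) ^ b ≤ ∫⁻ x, h x ∂μ

section Weights

variable {a b : ℝ} (ha : 0 < a) (hb : 0 < b) (hab : a + b = 1)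
include ha hb hab

lemma rpow_mul_rpow_le_ofReal_mul_add (s t : ℝ≥0∞) :
    s ^ a * t ^ b ≤ ENNReal.ofReal a * s + ENNReal.ofReal b * t := by
  rcases eq_or_ne s ∞ with rfl | hs
  · simp [ENNReal.mul_top, ha]
  rcases eq_or_ne t ∞ with rfl | ht
  · simp [ENNReal.mul_top, hb]
  lift s to ℝ≥0 using hs
  lift t to ℝ≥0 using ht
  lift a to ℝ≥0 using ha.le
  lift b to ℝ≥0 using hb.le
  simp only [ofReal_coe_nnreal, ← coe_rpow_of_nonneg _ NNReal.zero_le_coe]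
  exact_mod_cast NNReal.geom_mean_le_arith_mean2_weighted a b s t (mod_cast hab)

lemma rpow_mul_rpow_self (s : ℝ≥0∞) : s ^ a * s ^ b = s := by
  rw [← ENNReal.rpow_add_of_nonneg _ _ ha.le hb.le, hab, ENNReal.rpow_one]

variable {f g h : ℝ → ℝ≥0∞} (hfgh : ∀ x y, f x ^ a * g y ^ b ≤ h (a • x + b • y))
include hfgh

lemma smul_superlevel_add_smul_superlevel_subset (c : ℝ≥0∞) :
    a • {x | c < f x} + b • {x | c < g x} ⊆ {x | c < h x} := by
  rintro _ ⟨_, ⟨x, hx, rfl⟩, _, ⟨y, hy, rfl⟩, rfl⟩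
  calc c = c ^ a * c ^ b := (rpow_mul_rpow_self ha hb hab c).symm
    _ < f x ^ a * g y ^ b :=
        ENNReal.mul_lt_mul (ENNReal.rpow_lt_rpow hx ha) (ENNReal.rpow_lt_rpow hy hb)
    _ ≤ h (a • x + b • y) := hfgh x y

variable (hf : Measurable f) (hg : Measurable g)
include hf hg

lemma ofReal_mul_volume_superlevel_add_le {c : ℝ≥0∞} (hfc : c < ⨆ x, f x) (hgc : c < ⨆ x, g x) :
    ENNReal.ofReal a * volume {x | c < f x} + ENNReal.ofReal b * volume {x | c < g x} ≤
      volume {x | c < h x} := by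
  have hscale : ∀ r : ℝ, 0 < r → ∀ A : Set ℝ,
      ENNReal.ofReal r * volume A = volume (r • A) := fun r hr A => by
    simp [Measure.addHaar_smul, abs_of_pos hr]
  rw [hscale a ha, hscale b hb]
  exact (volume_add_le ((measurableSet_lt measurable_const hf).const_smul₀ a)
    ((measurableSet_lt measurable_const hg).const_smul₀ b)
    (Set.Nonempty.smul_set (lt_iSup_iff.1 hfc)) (Set.Nonempty.smul_set (lt_iSup_iff.1 hgc))).trans
    (measure_mono (smul_superlevel_add_smul_superlevel_subset ha hb hab hfgh c))

variable (hh : Measurable h)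
include hh

/- With equal suprema the superlevel sets of `f` and `g` are nonempty at the same heights, so the
Brunn–Minkowski inequality can be integrated over all of them. -/
lemma ofReal_mul_lintegral_add_le (hfg : ⨆ x, f x = ⨆ x, g x) :
    ENNReal.ofReal a * (∫⁻ x, f x) + ENNReal.ofReal b * (∫⁻ x, g x) ≤ ∫⁻ x, h x := by
  have hanti : Measurable fun c : ℝ => ENNReal.ofReal a * volume {x | ENNReal.ofReal c < f x} :=
    (Antitone.measurable fun c c' hc => measure_mono fun x (hx : ENNReal.ofReal c' < f x) =>
      (ofReal_le_ofReal hc).trans_lt hx).const_mul _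
  rw [lintegral_eq_lintegral_measure_ofReal_lt _ hf, lintegral_eq_lintegral_measure_ofReal_lt _ hg,
    lintegral_eq_lintegral_measure_ofReal_lt _ hh, ← lintegral_const_mul' _ _ ofReal_ne_top,
    ← lintegral_const_mul' _ _ ofReal_ne_top, ← lintegral_add_left hanti]
  refine lintegral_mono fun c => ?_
  rcases lt_or_ge (ENNReal.ofReal c) (⨆ x, f x) with hc | hc
  · exact ofReal_mul_volume_superlevel_add_le ha hb hab hfgh hf hg hc (hfg ▸ hc)
  · have hf' : ∀ x, ¬ ENNReal.ofReal c < f x := fun x => ((le_iSup f x).trans hc).not_gt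
    have hg' : ∀ x, ¬ ENNReal.ofReal c < g x := fun x => ((le_iSup g x).trans (hfg ▸ hc)).not_gt
    simp [hf', hg']

lemma lintegral_rpow_mul_le_of_iSup_ne_top (hft : ⨆ x, f x ≠ ∞) (hgt : ⨆ x, g x ≠ ∞) :
    (∫⁻ x, f x) ^ a * (∫⁻ x, g x) ^ b ≤ ∫⁻ x, h x := by
  rcases eq_or_ne (⨆ x, f x) 0 with hf₀ | hf₀
  · simp [iSup_eq_zero.1 hf₀, ha]
  rcases eq_or_ne (⨆ x, g x) 0 with hg₀ | hg₀
  · simp [iSup_eq_zero.1 hg₀, hb]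
  set F := ⨆ x, f x with hF
  set G := ⨆ x, g x with hG
  have hmul : ∀ s t : ℝ≥0∞, (G * s) ^ a * (F * t) ^ b = (G ^ a * F ^ b) * (s ^ a * t ^ b) :=
    fun s t => by
      rw [mul_rpow_of_nonneg _ _ ha.le, mul_rpow_of_nonneg _ _ hb.le, mul_mul_mul_comm]
  have hscaled := (rpow_mul_rpow_le_ofReal_mul_add ha hb hab _ _).trans <|
    ofReal_mul_lintegral_add_le ha hb hab (f := fun x => G * f x) (g := fun x => F * g x)
      (h := fun x => (G ^ a * F ^ b) * h x)
      (fun x y => (hmul _ _).trans_le (by gcongr; exact hfgh x y))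
      (by fun_prop) (by fun_prop) (by fun_prop)
      (by rw [← mul_iSup, ← mul_iSup, ← hF, ← hG, mul_comm])
  rw [lintegral_const_mul _ hf, lintegral_const_mul _ hg, lintegral_const_mul _ hh, hmul] at hscaled
  refine (ENNReal.mul_le_mul_iff_right ?_ ?_).1 hscaled
  · simp [ENNReal.rpow_eq_zero_iff, hf₀, hg₀, hft, hgt]
  · exact mul_ne_top (rpow_ne_top_of_nonneg ha.le hgt) (rpow_ne_top_of_nonneg hb.le hft)

end Weights

lemma tendsto_lintegral_min_natCast {α : Type*} [MeasurableSpace α] {μ : Measure α}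
    {f : α → ℝ≥0∞} (hf : Measurable f) :
    Tendsto (fun n : ℕ => ∫⁻ x, min (f x) n ∂μ) atTop (𝓝 (∫⁻ x, f x ∂μ)) := by
  refine lintegral_tendsto_of_tendsto_of_monotone (fun n => by fun_prop)
    (ae_of_all _ fun x m n hmn => min_le_min_left _ (by exact_mod_cast hmn))
    (ae_of_all _ fun x => ?_)
  simpa using (tendsto_const_nhds (x := f x)).min ENNReal.tendsto_nat_nhds_top

lemma prekopaLeindler_volume_real : PrekopaLeindler (volume : Measure ℝ) := by
  intro a b ha hb hab f g h hf hg hh hfgh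
  rcases eq_or_ne (∫⁻ x, f x) 0 with hf₀ | hf₀
  · simp [hf₀, ha]
  rcases eq_or_ne (∫⁻ x, g x) 0 with hg₀ | hg₀
  · simp [hg₀, hb]
  have hbdd : ∀ (u : ℝ → ℝ≥0∞) (n : ℕ), ⨆ x, min (u x) n ≠ ∞ := fun u n =>
    ((iSup_le fun x => min_le_right _ _).trans_lt (natCast_lt_top n)).ne
  refine le_of_tendsto (ENNReal.Tendsto.mul
    ((tendsto_lintegral_min_natCast hf).ennrpow_const a) (Or.inl (by simp [hf₀, ha.le]))
    ((tendsto_lintegral_min_natCast hg).ennrpow_const b) (Or.inl (by simp [hg₀, hb.le])))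
    (Eventually.of_forall fun n => ?_)
  refine lintegral_rpow_mul_le_of_iSup_ne_top ha hb hab (fun x y => le_trans ?_ (hfgh x y))
    (by fun_prop) (by fun_prop) hh (hbdd f n) (hbdd g n)
  gcongr <;> exact min_le_left _ _

namespace PrekopaLeindler

variable {E F : Type*} [AddCommGroup E] [Module ℝ E] [MeasurableSpace E]
  [AddCommGroup F] [Module ℝ F] [MeasurableSpace F] {μ : Measure E} {ν : Measure F}

lemma prod [SFinite ν] (hμ : PrekopaLeindler μ) (hν : PrekopaLeindler ν) :
    PrekopaLeindler (μ.prod ν) := by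
  intro a b ha hb hab f g h hf hg hh hfgh
  rw [lintegral_prod _ hf.aemeasurable, lintegral_prod _ hg.aemeasurable,
    lintegral_prod _ hh.aemeasurable]
  refine hμ ha hb hab hf.lintegral_prod_right' hg.lintegral_prod_right' hh.lintegral_prod_right'
    fun x y => hν ha hb hab (by fun_prop) (by fun_prop) (by fun_prop) fun x' y' => ?_
  simpa using hfgh (x, x') (y, y')

lemma map (hμ : PrekopaLeindler μ) (L : E →ₗ[ℝ] F) (hL : Measurable L) :
    PrekopaLeindler (μ.map L) := by
  intro a b ha hb hab f g h hf hg hh hfgh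
  rw [lintegral_map hf hL, lintegral_map hg hL, lintegral_map hh hL]
  refine hμ ha hb hab (hf.comp hL) (hg.comp hL) (hh.comp hL) fun x y => ?_
  simpa using hfgh (L x) (L y)

lemma smul (hμ : PrekopaLeindler μ) (c : ℝ≥0∞) : PrekopaLeindler (c • μ) := by
  intro a b ha hb hab f g h hf hg hh hfgh
  simp only [lintegral_smul_measure, smul_eq_mul]
  rw [mul_rpow_of_nonneg _ _ ha.le, mul_rpow_of_nonneg _ _ hb.le, mul_mul_mul_comm,
    rpow_mul_rpow_self ha hb hab]
  gcongr
  exact hμ ha hb hab hf hg hh hfgh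

end PrekopaLeindler

lemma prekopaLeindler_volume_pi (d : ℕ) : PrekopaLeindler (volume : Measure (Fin d → ℝ)) := by
  induction d with
  | zero =>
    intro a b _ _ _ f g h _ _ _ hfgh
    simpa [Measure.volume_pi_eq_dirac (0 : Fin 0 → ℝ)] using hfgh 0 0
  | succ d ih =>
    let L := (Fin.consLinearEquiv ℝ fun _ : Fin (d + 1) => ℝ).toLinearMap
    have hL : MeasurePreserving L := by
      have : ⇑L = (MeasurableEquiv.piFinSuccAbove (fun _ => ℝ) 0).symm := by
        ext x i
        simp [L, MeasurableEquiv.piFinSuccAbove]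
      rw [this]
      exact (volume_preserving_piFinSuccAbove (fun _ => ℝ) 0).symm
    rw [← hL.map_eq]
    exact (prekopaLeindler_volume_real.prod ih).map L hL.measurable

lemma prekopaLeindler_of_isAddHaarMeasure {E : Type*} [NormedAddCommGroup E] [NormedSpace ℝ E]
    [FiniteDimensional ℝ E] [MeasurableSpace E] [BorelSpace E] (μ : Measure E)
    [μ.IsAddHaarMeasure] : PrekopaLeindler μ := by
  let L : (Fin (Module.finrank ℝ E) → ℝ) ≃L[ℝ] E :=
    ContinuousLinearEquiv.ofFinrankEq (by simp)
  have : (volume.map L).IsAddHaarMeasure := L.isAddHaarMeasure_map volume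
  rw [Measure.isAddLeftInvariant_eq_smul μ (volume.map L)]
  exact ((prekopaLeindler_volume_pi _).map L.toLinearMap L.continuous.measurable).smul _

end PrekopaLeindler

section Entropy

open ProbabilityTheory

variable {α : Type*} [MeasurableSpace α] {μ ν : Measure α} [IsProbabilityMeasure μ]
  [IsProbabilityMeasure ν] {X : α → ℝ} {t : ℝ}

/- Gibbs: the divergence of `ν` from the tilted measure `e^{tX} μ / E[e^{tX}]` is nonnegative. -/
lemma mul_integral_le_integral_llr_add_cgf (hνμ : ν ≪ μ) (hllr : Integrable (llr ν μ) ν)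
    (hX : Integrable X ν) (hexp : Integrable (fun x => Real.exp (t * X x)) μ) :
    t * ∫ x, X x ∂ν ≤ ∫ x, llr ν μ x ∂ν + cgf X μ t := by
  have : IsProbabilityMeasure (μ.tilted (t * X ·)) := isProbabilityMeasure_tilted hexp
  have hnonneg := InformationTheory.integral_llr_add_sub_measure_univ_nonneg
    (hνμ.trans (absolutelyContinuous_tilted hexp))
    (integrable_llr_tilted_right hνμ (hX.const_mul t) hllr hexp)
  rw [integral_llr_tilted_right hνμ (hX.const_mul t) hexp hllr, integral_const_mul] at hnonneg
  simp only [probReal_univ] at hnonneg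
  rw [cgf, mgf]
  linarith

lemma mul_integral_le_cgf (hX : Integrable X μ)
    (hexp : Integrable (fun x => Real.exp (t * X x)) μ) :
    t * ∫ x, X x ∂μ ≤ cgf X μ t := by
  have hself : llr μ μ =ᵐ[μ] 0 := llr_self μ
  simpa [integral_congr_ae hself] using mul_integral_le_integral_llr_add_cgf
    Measure.AbsolutelyContinuous.rfl ((integrable_zero α ℝ μ).congr hself.symm) hX hexp

end Entropy

section DualTransportInequality

open ProbabilityTheory

variable {E : Type*} [NormedAddCommGroup E] [NormedSpace ℝ E] [MeasurableSpace E] {μ π₀ : Measure E}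
  [IsProbabilityMeasure π₀] (hμ : PrekopaLeindler μ) {ρ : ℝ} {V : E → ℝ} (hVm : Measurable V)
  (hV : StrongConvexOn univ ρ V)
  (hπ₀ : π₀ = μ.withDensity fun x => ENNReal.ofReal (Real.exp (-V x)))
include hμ hVm hV hπ₀

/- Strong convexity of `V` gains `ρ / 2 * a * b * ‖x - y‖ ^ 2`, which is exactly what the terms in
`u` and `w` cost. -/
lemma lintegral_exp_rpow_mul_le_one (hρ : 0 ≤ ρ) {a b : ℝ} (ha : 0 < a) (hb : 0 < b)
    (hab : a + b = 1) {u w : E → ℝ} (hu : Measurable u) (hw : Measurable w)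
    (huw : ∀ x y, u x + w y ≤ ‖x - y‖ ^ 2) :
    (∫⁻ x, ENNReal.ofReal (Real.exp (ρ * b / 2 * u x)) ∂π₀) ^ a *
      (∫⁻ x, ENNReal.ofReal (Real.exp (ρ * a / 2 * w x)) ∂π₀) ^ b ≤ 1 := by
  have hdens : Measurable fun x => ENNReal.ofReal (Real.exp (-V x)) := by fun_prop
  have hmass : ∫⁻ x, ENNReal.ofReal (Real.exp (-V x)) ∂μ = 1 := by
    simpa [hπ₀] using measure_univ (μ := π₀)
  have hexp : ∀ φ : E → ℝ, Measurable φ → ∫⁻ x, ENNReal.ofReal (Real.exp (φ x)) ∂π₀ =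
      ∫⁻ x, ENNReal.ofReal (Real.exp (-V x + φ x)) ∂μ := fun φ hφ => by
    rw [hπ₀, lintegral_withDensity_eq_lintegral_mul _ hdens (by fun_prop)]
    refine lintegral_congr fun x => ?_
    rw [Pi.mul_apply, ← ofReal_mul (Real.exp_pos _).le, ← Real.exp_add]
  rw [hexp _ (by fun_prop), hexp _ (by fun_prop), ← hmass]
  refine hμ ha hb hab (by fun_prop) (by fun_prop) hdens fun x y => ?_
  rw [ofReal_rpow_of_pos (Real.exp_pos _), ofReal_rpow_of_pos (Real.exp_pos _),
    ← ofReal_mul (by positivity), ← Real.exp_mul, ← Real.exp_mul, ← Real.exp_add]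
  refine ofReal_le_ofReal (Real.exp_le_exp.2 ?_)
  have hconv := hV.2 (mem_univ x) (mem_univ y) ha.le hb.le hab
  have hcost := mul_le_mul_of_nonneg_left (huw x y) (by positivity : 0 ≤ ρ / 2 * a * b)
  simp only [smul_eq_mul] at hconv
  linarith

lemma mul_cgf_add_mul_cgf_nonpos (hρ : 0 ≤ ρ) {a b : ℝ} (ha : 0 < a) (hb : 0 < b)
    (hab : a + b = 1) {u w : E → ℝ} (hu : Measurable u) (hw : Measurable w)
    (hu_exp : Integrable (fun x => Real.exp (ρ * b / 2 * u x)) π₀)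
    (hw_exp : Integrable (fun x => Real.exp (ρ * a / 2 * w x)) π₀)
    (huw : ∀ x y, u x + w y ≤ ‖x - y‖ ^ 2) :
    a * cgf u π₀ (ρ * b / 2) + b * cgf w π₀ (ρ * a / 2) ≤ 0 := by
  have hprod := lintegral_exp_rpow_mul_le_one hμ hVm hV hπ₀ hρ ha hb hab hu hw huw
  have hu_pos := mgf_pos hu_exp
  have hw_pos := mgf_pos hw_exp
  have hmgf : ∀ {φ : E → ℝ} {t : ℝ}, Integrable (fun x => Real.exp (t * φ x)) π₀ →
      ∫⁻ x, ENNReal.ofReal (Real.exp (t * φ x)) ∂π₀ = ENNReal.ofReal (mgf φ π₀ t) := fun hφ =>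
    (ofReal_integral_eq_lintegral_ofReal hφ (ae_of_all _ fun _ => (Real.exp_pos _).le)).symm
  rw [hmgf hu_exp, hmgf hw_exp, ofReal_rpow_of_pos hu_pos, ofReal_rpow_of_pos hw_pos,
    ← ofReal_mul (by positivity), ofReal_le_one] at hprod
  have hlog := Real.log_nonpos (by positivity) hprod
  rwa [Real.log_mul (by positivity) (by positivity), Real.log_rpow hu_pos,
    Real.log_rpow hw_pos] at hlog

variable {ν : Measure E} [IsProbabilityMeasure ν]

lemma integral_add_integral_le_mul_integral_llr (hρ : 0 < ρ) (hνπ₀ : ν ≪ π₀)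
    (hllr : Integrable (llr ν π₀) ν) {u w : SimpleFunc E ℝ}
    (huw : ∀ x y, u x + w y ≤ ‖x - y‖ ^ 2) :
    ∫ x, u x ∂π₀ + ∫ y, w y ∂ν ≤ 2 / ρ * ∫ x, llr ν π₀ x ∂ν := by
  have hexp : ∀ (f : SimpleFunc E ℝ) (t : ℝ), Integrable (fun x => Real.exp (t * f x)) π₀ :=
    fun f t => (f.map fun s => Real.exp (t * s)).integrable_of_isFiniteMeasure
  have hscaled : ∀ a ∈ Ioo (0 : ℝ) 1,
      a * (∫ x, u x ∂π₀ + ∫ y, w y ∂ν) ≤ 2 / ρ * ∫ x, llr ν π₀ x ∂ν := fun a ⟨ha, ha₁⟩ => by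
    have hb : 0 < 1 - a := sub_pos.2 ha₁
    have hcgf := mul_cgf_add_mul_cgf_nonpos hμ hVm hV hπ₀ hρ.le ha hb (by ring) u.measurable
      w.measurable (hexp u _) (hexp w _) huw
    have hu := mul_le_mul_of_nonneg_left
      (mul_integral_le_cgf u.integrable_of_isFiniteMeasure (hexp u (ρ * (1 - a) / 2))) ha.le
    have hw := mul_le_mul_of_nonneg_left (mul_integral_le_integral_llr_add_cgf hνπ₀ hllr
      w.integrable_of_isFiniteMeasure (hexp w (ρ * a / 2))) hb.le
    rw [div_mul_eq_mul_div, le_div_iff₀ hρ]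
    refine le_of_mul_le_mul_left ?_ hb
    linarith
  have hlim : Tendsto (fun a => a * (∫ x, u x ∂π₀ + ∫ y, w y ∂ν)) (𝓝[<] 1)
      (𝓝 (1 * (∫ x, u x ∂π₀ + ∫ y, w y ∂ν))) :=
    (tendsto_id.mono_left nhdsWithin_le_nhds).mul_const _
  rw [one_mul] at hlim
  exact le_of_tendsto hlim (mem_of_superset (Ioo_mem_nhdsLT zero_lt_one) hscaled)

end DualTransportInequality

section ConvexDuality

variable {Z F : Type*} [Fintype Z] [AddCommGroup F] [Module ℝ F] [TopologicalSpace F]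
  [IsTopologicalAddGroup F] [ContinuousSMul ℝ F] [LocallyConvexSpace ℝ F] [T1Space F]
  {p : Z → F} {c : Z → ℝ} {x : F} {t : ℝ}

lemma exists_separation_convexHull_epigraph
    (h : ∀ w ∈ stdSimplex ℝ Z, ∑ z, w z • p z = x → t < ∑ z, w z * c z) :
    ∃ (g : F →L[ℝ] ℝ) (γ r : ℝ),
      (∀ w ∈ stdSimplex ℝ Z, g (∑ z, w z • p z) + γ * ∑ z, w z * c z < r) ∧
        r < g x + γ * t := by
  let L := Fintype.linearCombination ℝ fun z => (p z, c z)
  have hL : ∀ w, L w = (∑ z, w z • p z, ∑ z, w z * c z) := fun w => by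
    simp [L, Fintype.linearCombination_apply, Prod.ext_iff, Prod.fst_sum, Prod.snd_sum]
  have hdisj : Disjoint (L '' stdSimplex ℝ Z) ({x} ×ˢ Iic t) := by
    rw [Set.disjoint_left]
    rintro _ ⟨w, hw, rfl⟩ hwx
    rw [hL] at hwx
    exact (h w hw hwx.1).not_ge hwx.2
  obtain ⟨f, r, s, hfr, hrs, hsf⟩ := geometric_hahn_banach_compact_closed
    ((convex_stdSimplex ℝ Z).linear_image L)
    ((isCompact_stdSimplex ℝ Z).image L.continuous_on_pi)
    ((convex_singleton x).prod (convex_Iic t)) (isClosed_singleton.prod isClosed_Iic) hdisj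
  have hf : ∀ y u, f (y, u) = f.comp (.inl ℝ F ℝ) y + f (0, 1) * u := fun y u => by
    rw [mul_comm, ← smul_eq_mul, ← map_smul]
    simp [← map_add]
  refine ⟨f.comp (.inl ℝ F ℝ), f (0, 1), r, fun w hw => ?_, ?_⟩
  · rw [← hf, ← hL]
    exact hfr _ ⟨w, hw, rfl⟩
  · rw [← hf]
    exact hrs.trans (hsf (x, t) ⟨rfl, mem_Iic.2 le_rfl⟩)

/- Otherwise a hyperplane separates `(x, t)` from the convex hull of the points `(p z, c z)`. It is
not vertical because `x` lies in the convex hull of the points `p z`, so it is the graph of an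
affine minorant of `c`. -/
lemma exists_mem_stdSimplex_of_forall_affine_minorant
    (hx : ∃ w ∈ stdSimplex ℝ Z, ∑ z, w z • p z = x)
    (h : ∀ (f : F →L[ℝ] ℝ) (r : ℝ), (∀ z, f (p z) + r ≤ c z) → f x + r ≤ t) :
    ∃ w ∈ stdSimplex ℝ Z, ∑ z, w z • p z = x ∧ ∑ z, w z * c z ≤ t := by
  by_contra! hcon
  obtain ⟨g, γ, r, hhull, hx_lt⟩ := exists_separation_convexHull_epigraph hcon
  have hvertex : ∀ z, g (p z) + γ * c z < r := fun z => by
    simpa [Pi.single_apply] using hhull _ (single_mem_stdSimplex ℝ z)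
  have hγ : γ < 0 := by
    obtain ⟨w, hw, rfl⟩ := hx
    nlinarith [hhull w hw, hcon w hw rfl]
  have hminorant := h ((-γ)⁻¹ • g) ((-γ)⁻¹ * -r) fun z => by
    simp only [smul_apply, smul_eq_mul, ← mul_add]
    rw [inv_mul_le_iff₀ (by linarith)]
    linarith [hvertex z]
  simp only [smul_apply, smul_eq_mul, ← mul_add] at hminorant
  rw [inv_mul_le_iff₀ (by linarith)] at hminorant
  linarith

end ConvexDuality

section Couplings

variable {X Y ι κ : Type*} [MeasurableSpace X] [MeasurableSpace Y] [MeasurableSpace ι]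
  [MeasurableSpace κ]

/-- The couplings of `μ` and `ν`, that is, the transport plans from `μ` to `ν`: the version of
`IsCoupling` for measures on two arbitrary spaces. -/
def couplings (μ : Measure X) (ν : Measure Y) : Set (Measure (X × Y)) :=
  {π | IsProbabilityMeasure π ∧ π.map Prod.fst = μ ∧ π.map Prod.snd = ν}

lemma prod_mem_couplings (μ : Measure X) [IsProbabilityMeasure μ] (ν : Measure Y)
    [IsProbabilityMeasure ν] : μ.prod ν ∈ couplings μ ν :=
  ⟨inferInstance, by simp, by simp⟩

section Gluing

open ProbabilityTheory

lemma map_fst_parallelComp_comp (K : Kernel ι X) [IsSFiniteKernel K] (L : Kernel κ Y)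
    [IsMarkovKernel L] (γ : Measure (ι × κ)) :
    ((K ∥ₖ L) ∘ₘ γ).map Prod.fst = K ∘ₘ γ.map Prod.fst := by
  have : (K ∥ₖ L).map Prod.fst = K ∘ₖ Kernel.deterministic Prod.fst measurable_fst := by
    ext1 z
    simp [Kernel.map_apply _ measurable_fst, Kernel.parallelComp_apply,
      Kernel.comp_deterministic_eq_comap]
  rw [Measure.map_comp _ _ measurable_fst, this, ← Measure.comp_assoc,
    Measure.deterministic_comp_eq_map]

lemma map_snd_parallelComp_comp (K : Kernel ι X) [IsMarkovKernel K] (L : Kernel κ Y)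
    [IsSFiniteKernel L] (γ : Measure (ι × κ)) :
    ((K ∥ₖ L) ∘ₘ γ).map Prod.snd = L ∘ₘ γ.map Prod.snd := by
  have : (K ∥ₖ L).map Prod.snd = L ∘ₖ Kernel.deterministic Prod.snd measurable_snd := by
    ext1 z
    simp [Kernel.map_apply _ measurable_snd, Kernel.parallelComp_apply,
      Kernel.comp_deterministic_eq_comap]
  rw [Measure.map_comp _ _ measurable_snd, this, ← Measure.comp_assoc,
    Measure.deterministic_comp_eq_map]

variable [StandardBorelSpace X] [StandardBorelSpace Y] [StandardBorelSpace ι]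
  [StandardBorelSpace κ]

lemma map_condDistrib_id_ae_eq_id [Nonempty X] [Nonempty ι] (μ : Measure X) [IsFiniteMeasure μ]
    {q : X → ι} (hq : Measurable q) :
    (condDistrib id q μ).map q =ᵐ[μ.map q] Kernel.id :=
  (condDistrib_comp q aemeasurable_id hq).symm.trans (condDistrib_self q)

lemma exists_mem_couplings_map_prodMap_eq {μ : Measure X} [IsProbabilityMeasure μ]
    {ν : Measure Y} [IsProbabilityMeasure ν] {q : X → ι} (hq : Measurable q) {r : Y → κ}
    (hr : Measurable r) {γ : Measure (ι × κ)} (hγ : γ ∈ couplings (μ.map q) (ν.map r)) :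
    ∃ π ∈ couplings μ ν, π.map (Prod.map q r) = γ := by
  obtain ⟨_, hγ₁, hγ₂⟩ := hγ
  have := nonempty_of_isProbabilityMeasure μ
  have := nonempty_of_isProbabilityMeasure ν
  have : Nonempty ι := .map q inferInstance
  have : Nonempty κ := .map r inferInstance
  let K := condDistrib id q μ
  let L := condDistrib id r ν
  have hproj : ∀ᵐ z ∂γ, (K ∥ₖ L).map (Prod.map q r) z = Kernel.id z := by
    filter_upwards [ae_of_ae_map measurable_fst.aemeasurable
        (hγ₁ ▸ map_condDistrib_id_ae_eq_id μ hq),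
      ae_of_ae_map measurable_snd.aemeasurable (hγ₂ ▸ map_condDistrib_id_ae_eq_id ν hr)]
      with z hz₁ hz₂
    rw [Kernel.map_apply _ hq] at hz₁
    rw [Kernel.map_apply _ hr] at hz₂
    rw [Kernel.map_apply _ (hq.prodMap hr), Kernel.parallelComp_apply,
      ← Measure.map_prod_map _ _ hq hr, hz₁, hz₂]
    simp [Kernel.id_apply, Measure.dirac_prod_dirac]
  refine ⟨(K ∥ₖ L) ∘ₘ γ, ⟨inferInstance, ?_, ?_⟩, ?_⟩
  · rw [map_fst_parallelComp_comp, hγ₁, condDistrib_comp_map hq.aemeasurable aemeasurable_id,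
      Measure.map_id]
  · rw [map_snd_parallelComp_comp, hγ₂, condDistrib_comp_map hr.aemeasurable aemeasurable_id,
      Measure.map_id]
  · rw [Measure.map_comp _ _ (hq.prodMap hr), Measure.comp_congr hproj, Measure.id_comp]

end Gluing

end Couplings

section FiniteKantorovich

variable {ι κ : Type*} [MeasurableSpace ι] [MeasurableSpace κ]
  [MeasurableSingletonClass ι] [MeasurableSingletonClass κ]

lemma integral_single_add_integral_single [Finite ι] [Finite κ] (m : Measure ι)
    [IsFiniteMeasure m] (n : Measure κ) [IsFiniteMeasure n] (f : (ι → ℝ) × (κ → ℝ) →L[ℝ] ℝ) :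
    ∫ i, f (Pi.single i 1, 0) ∂m + ∫ j, f (0, Pi.single j 1) ∂n =
      f (fun i => m.real {i}, fun j => n.real {j}) := by
  have := Fintype.ofFinite ι
  have := Fintype.ofFinite κ
  have hm := congrArg (f.comp (.inl ℝ _ _)) (pi_eq_sum_univ' fun i => m.real {i})
  have hn := congrArg (f.comp (.inr ℝ _ _)) (pi_eq_sum_univ' fun j => n.real {j})
  rw [map_sum] at hm hn
  simp only [map_smul] at hm hn
  rw [integral_fintype .of_finite, integral_fintype .of_finite]
  refine (congrArg₂ (· + ·) hm hn).symm.trans ?_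
  simp [← map_add]

variable {m : Measure ι} [IsProbabilityMeasure m] {n : Measure κ} [IsProbabilityMeasure n]

lemma exists_mem_couplings_lintegral_eq_of_mem_stdSimplex [Fintype ι] [Fintype κ]
    {w : ι × κ → ℝ} (hw : w ∈ stdSimplex ℝ (ι × κ)) (hwm : ∀ i, ∑ j, w (i, j) = m.real {i})
    (hwn : ∀ j, ∑ i, w (i, j) = n.real {j}) (c : ι × κ → ℝ≥0) :
    ∃ π ∈ couplings m n, ∫⁻ z, c z ∂π = ENNReal.ofReal (∑ z, w z * c z) := by
  let π : Measure (ι × κ) := ∑ z, ENNReal.ofReal (w z) • Measure.dirac z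
  have hπ : ∀ f : ι × κ → ℝ≥0∞, ∫⁻ z, f z ∂π = ∑ z, ENNReal.ofReal (w z) * f z := fun f => by
    simp [π, lintegral_finsetSum_measure]
  have hfst : π.map Prod.fst = m := by
    refine Measure.ext_of_singleton fun i => ?_
    rw [← lintegral_indicator_one (measurableSet_singleton i),
      lintegral_map (by fun_prop) (by fun_prop), hπ, Fintype.sum_prod_type]
    simp [indicator_apply, ← ENNReal.ofReal_sum_of_nonneg, hw.1 _, hwm]
  have hsnd : π.map Prod.snd = n := by
    refine Measure.ext_of_singleton fun j => ?_
    rw [← lintegral_indicator_one (measurableSet_singleton j),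
      lintegral_map (by fun_prop) (by fun_prop), hπ, Fintype.sum_prod_type_right]
    simp [indicator_apply, ← ENNReal.ofReal_sum_of_nonneg, hw.1 _, hwn]
  have : IsProbabilityMeasure (π.map Prod.fst) := hfst ▸ inferInstance
  refine ⟨π, ⟨Measure.isProbabilityMeasure_of_map Prod.fst, hfst, hsnd⟩, ?_⟩
  rw [hπ, ENNReal.ofReal_sum_of_nonneg (f := fun z => w z * c z)
    fun z _ => mul_nonneg (hw.1 z) (c z).2]
  simp [ENNReal.ofReal_mul, hw.1 _]

lemma exists_mem_couplings_lintegral_le_of_finite [Finite ι] [Finite κ] {c : ι × κ → ℝ≥0} {v : ℝ}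
    (h : ∀ (a : ι → ℝ) (b : κ → ℝ), (∀ i j, a i + b j ≤ c (i, j)) →
      ∫ i, a i ∂m + ∫ j, b j ∂n ≤ v) :
    ∃ π ∈ couplings m n, ∫⁻ z, c z ∂π ≤ ENNReal.ofReal v := by
  have := Fintype.ofFinite ι
  have := Fintype.ofFinite κ
  let p (z : ι × κ) : (ι → ℝ) × (κ → ℝ) := (Pi.single z.1 1, Pi.single z.2 1)
  have hp : ∀ w : ι × κ → ℝ,
      ∑ z, w z • p z = (fun i => ∑ j, w (i, j), fun j => ∑ i, w (i, j)) := fun w => by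
    ext k
    · simp [p, Prod.fst_sum, Fintype.sum_prod_type, Pi.single_apply]
    · simp [p, Prod.snd_sum, Fintype.sum_prod_type_right, Pi.single_apply]
  have hprod : ∃ w ∈ stdSimplex ℝ (ι × κ),
      ∑ z, w z • p z = (fun i => m.real {i}, fun j => n.real {j}) := by
    refine ⟨fun z => (m.prod n).real {z}, ⟨fun z => measureReal_nonneg, ?_⟩, ?_⟩
    · simp
    · simp only [hp, ← singleton_prod_singleton, measureReal_prod_prod, ← Finset.mul_sum,
        ← Finset.sum_mul, sum_measureReal_singleton]
      simp
  obtain ⟨w, hw, hwp, hcost⟩ := exists_mem_stdSimplex_of_forall_affine_minorant hprod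
    (c := fun z => c z) (t := v) fun f r hfr => by
      have hab := h (fun i => f (Pi.single i 1, 0) + r) (fun j => f (0, Pi.single j 1))
        fun i j => by
          rw [add_right_comm, ← map_add, Prod.mk_add_mk, add_zero, zero_add]
          exact hfr (i, j)
      rwa [integral_add .of_finite (integrable_const r), integral_const, probReal_univ, one_smul,
        add_right_comm, integral_single_add_integral_single] at hab
  rw [hp, Prod.mk.injEq, funext_iff, funext_iff] at hwp
  obtain ⟨π, hπ, hπc⟩ := exists_mem_couplings_lintegral_eq_of_mem_stdSimplex hw hwp.1 hwp.2 c
  exact ⟨π, hπ, hπc.trans_le (ENNReal.ofReal_le_ofReal hcost)⟩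

end FiniteKantorovich

section Compactness

open TopologicalSpace

variable {K L : Type*} [TopologicalSpace K] [TopologicalSpace L] [MetrizableSpace K]
  [MetrizableSpace L] [SecondCountableTopology L] [MeasurableSpace K] [MeasurableSpace L]
  [BorelSpace K] [BorelSpace L]
  {μ : Measure K} [IsProbabilityMeasure μ] {ν : Measure L} [IsProbabilityMeasure ν]

lemma isClosed_probabilityMeasure_mem_couplings :
    IsClosed {π : ProbabilityMeasure (K × L) | (π : Measure (K × L)) ∈ couplings μ ν} := by
  let μ' : ProbabilityMeasure K := ⟨μ, ‹_›⟩
  let ν' : ProbabilityMeasure L := ⟨ν, ‹_›⟩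
  convert (isClosed_eq (ProbabilityMeasure.continuous_map continuous_fst)
    (continuous_const (y := μ'))).inter (isClosed_eq
      (ProbabilityMeasure.continuous_map continuous_snd) (continuous_const (y := ν'))) using 1
  ext π
  exact (and_iff_right π.prop).trans
    (and_congr (Subtype.ext_iff (a1 := π.map continuous_fst.aemeasurable) (a2 := μ')).symm
      (Subtype.ext_iff (a1 := π.map continuous_snd.aemeasurable) (a2 := ν')).symm)

lemma exists_mem_couplings_forall_lintegral_le [CompactSpace K] [CompactSpace L]
    {c : ℕ → K × L → ℝ≥0} (hc : ∀ n, Continuous (c n))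
    (hmono : Monotone c) {v : ℝ≥0∞} (h : ∀ n, ∃ π ∈ couplings μ ν, ∫⁻ z, c n z ∂π ≤ v) :
    ∃ π ∈ couplings μ ν, ∀ n, ∫⁻ z, c n z ∂π ≤ v := by
  let S (n : ℕ) : Set (ProbabilityMeasure (K × L)) :=
    {π | (π : Measure (K × L)) ∈ couplings μ ν} ∩ {π | ∫⁻ z, c n z ∂(π : Measure (K × L)) ≤ v}
  have hclosed : ∀ n, IsClosed (S n) := fun n =>
    isClosed_probabilityMeasure_mem_couplings.inter <| isClosed_le
      (ProbabilityMeasure.continuous_lintegral_continuousMap (⟨c n, hc n⟩ : C(K × L, ℝ≥0)))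
      continuous_const
  have hanti : ∀ n, S (n + 1) ⊆ S n := fun n π hπ =>
    ⟨hπ.1, (lintegral_mono fun z => by gcongr; exact hmono n.le_succ z).trans hπ.2⟩
  have hne : ∀ n, (S n).Nonempty := fun n => by
    obtain ⟨π, hπ, hcost⟩ := h n
    exact ⟨⟨π, hπ.1⟩, hπ, hcost⟩
  obtain ⟨π, hπ⟩ := IsCompact.nonempty_iInter_of_sequence_nonempty_isCompact_isClosed S hanti hne
    (hclosed 0).isCompact hclosed
  rw [mem_iInter] at hπ
  exact ⟨π, (hπ 0).1, fun n => (hπ n).2⟩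

end Compactness

section Kantorovich

lemma exists_measurable_natBool_separating_nhds (X : Type*) [TopologicalSpace X]
    [SecondCountableTopology X] [MeasurableSpace X] [OpensMeasurableSpace X] :
    ∃ Q : X → ℕ → Bool, Measurable Q ∧
      ∀ x, ∀ s ∈ 𝓝 x, ∃ k, ∀ y, Q y k = Q x k → y ∈ s := by
  obtain ⟨b, hb⟩ := TopologicalSpace.exists_seq_basis X
  refine ⟨fun x k => decide (x ∈ b k), measurable_pi_lambda _ fun k => ?_, fun x s hs => ?_⟩
  · exact measurable_to_bool (by
      simpa [Set.preimage] using (hb.isOpen ⟨k, rfl⟩).measurableSet)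
  · obtain ⟨_, ⟨k, rfl⟩, hxk, hks⟩ := hb.mem_nhds_iff.1 hs
    exact ⟨k, fun y hy => hks (by simpa [hxk] using hy)⟩

/-- The infimum of the cost `c` over the fibre of `p` above `k`, capped at `n` to make it finite,
even when the fibre is empty: the cost induced by `c` on the image of a discretization `p`. -/
def fibreInf {Z K : Type*} (p : Z → K) (c : Z → ℝ≥0∞) (n : ℕ) (k : K) : ℝ≥0 :=
  (min (n : ℝ≥0∞) (⨅ (z) (_ : p z = k), c z)).toNNReal

section FibreInf

variable {Z K : Type*} {p : Z → K} {c : Z → ℝ≥0∞}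

lemma coe_fibreInf (n : ℕ) (k : K) :
    (fibreInf p c n k : ℝ≥0∞) = min (n : ℝ≥0∞) (⨅ (z) (_ : p z = k), c z) :=
  ENNReal.coe_toNNReal (ne_top_of_le_ne_top (ENNReal.natCast_ne_top n) (min_le_left _ _))

lemma fibreInf_apply_le (n : ℕ) (z : Z) : (fibreInf p c n (p z) : ℝ≥0∞) ≤ c z :=
  (coe_fibreInf n _).trans_le ((min_le_right _ _).trans (iInf₂_le (f := fun z _ => c z) z rfl))

lemma fibreInf_le_fibreInf {L : Type*} {p' : Z → L} {k : K} {l : L} (h : ∀ z, p z = k → p' z = l)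
    {m n : ℕ} (hmn : m ≤ n) : fibreInf p' c m l ≤ fibreInf p c n k := by
  rw [← ENNReal.coe_le_coe, coe_fibreInf, coe_fibreInf]
  exact min_le_min (by exact_mod_cast hmn) (le_iInf₂ fun z hz => iInf₂_le z (h z hz))

/-- The digits `0, …, n` of a pair of binary sequences: the discretization of the product of two
Cantor spaces at scale `n`. -/
def binaryPrefix (n : ℕ) :
    (ℕ → Bool) × (ℕ → Bool) → (Finset.Iic n → Bool) × (Finset.Iic n → Bool) :=
  Prod.map (Preorder.frestrictLe n) (Preorder.frestrictLe n)

lemma binaryPrefix_eq_binaryPrefix_iff {n : ℕ} {k l : (ℕ → Bool) × (ℕ → Bool)} :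
    binaryPrefix n k = binaryPrefix n l ↔ ∀ i ≤ n, k.1 i = l.1 i ∧ k.2 i = l.2 i := by
  simp [binaryPrefix, Prod.ext_iff, funext_iff, forall_and]

lemma continuous_binaryPrefix (n : ℕ) : Continuous (binaryPrefix n) :=
  (Preorder.continuous_frestrictLe n).prodMap (Preorder.continuous_frestrictLe n)

/-- The largest cost on pairs of binary sequences that only depends on the digits `0, …, n`, is at
most `n`, and is at most `c` when pulled back along `Φ`. -/
def cylinderInf (Φ : Z → (ℕ → Bool) × (ℕ → Bool)) (c : Z → ℝ≥0∞) (n : ℕ) :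
    (ℕ → Bool) × (ℕ → Bool) → ℝ≥0 :=
  fibreInf (binaryPrefix n ∘ Φ) c n ∘ binaryPrefix n

variable {Φ : Z → (ℕ → Bool) × (ℕ → Bool)}

lemma continuous_cylinderInf (n : ℕ) : Continuous (cylinderInf Φ c n) :=
  (continuous_of_discreteTopology (f := fibreInf (binaryPrefix n ∘ Φ) c n)).comp
    (continuous_binaryPrefix n)

lemma monotone_cylinderInf : Monotone (cylinderInf Φ c) := fun m n hmn k =>
  fibreInf_le_fibreInf (fun z hz => by
    simp only [Function.comp_apply, binaryPrefix_eq_binaryPrefix_iff] at hz ⊢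
    exact fun i hi => hz i (hi.trans hmn)) hmn

lemma le_iSup_cylinderInf {X Y : Type*} [TopologicalSpace X] [TopologicalSpace Y]
    {c : X × Y → ℝ≥0∞} (hc : LowerSemicontinuous c) {Q : X → ℕ → Bool}
    (hQ : ∀ x, ∀ s ∈ 𝓝 x, ∃ k, ∀ y, Q y k = Q x k → y ∈ s) {R : Y → ℕ → Bool}
    (hR : ∀ y, ∀ t ∈ 𝓝 y, ∃ k, ∀ y', R y' k = R y k → y' ∈ t) (z : X × Y) :
    c z ≤ ⨆ n, (cylinderInf (Prod.map Q R) c n (Prod.map Q R z) : ℝ≥0∞) := by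
  refine le_of_forall_lt_imp_le_of_dense fun a ha => ?_
  obtain ⟨s, hs, t, ht, hst⟩ := mem_nhds_prod_iff.1 (hc z a ha)
  obtain ⟨i, hi⟩ := hQ _ s hs
  obtain ⟨j, hj⟩ := hR _ t ht
  obtain ⟨k, hk⟩ := ENNReal.exists_nat_gt ha.ne_top
  refine le_iSup_of_le (max i (max j k)) ?_
  rw [cylinderInf, Function.comp_apply, coe_fibreInf]
  refine le_min (hk.le.trans (by simp)) (le_iInf₂ fun z' hz' => ?_)
  rw [Function.comp_apply, binaryPrefix_eq_binaryPrefix_iff] at hz'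
  exact (hst ⟨hi _ (hz' i (by simp)).1, hj _ (hz' j (by simp)).2⟩).le

end FibreInf

variable {X Y : Type*} [MeasurableSpace X] [MeasurableSpace Y] {μ : Measure X}
  [IsProbabilityMeasure μ] {ν : Measure Y} [IsProbabilityMeasure ν] {c : X × Y → ℝ≥0∞} {v : ℝ}

lemma exists_mem_couplings_lintegral_fibreInf_le {ι κ : Type*} [Finite ι] [Finite κ]
    [MeasurableSpace ι] [MeasurableSpace κ] [MeasurableSingletonClass ι]
    [MeasurableSingletonClass κ] {q : X → ι} (hq : Measurable q) {r : Y → κ} (hr : Measurable r)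
    (h : ∀ (u : SimpleFunc X ℝ) (w : SimpleFunc Y ℝ),
      (∀ x y, ENNReal.ofReal (u x + w y) ≤ c (x, y)) → ∫ x, u x ∂μ + ∫ y, w y ∂ν ≤ v) (n : ℕ) :
    ∃ γ ∈ couplings (μ.map q) (ν.map r),
      ∫⁻ z, fibreInf (Prod.map q r) c n z ∂γ ≤ ENNReal.ofReal v := by
  have := Measure.isProbabilityMeasure_map hq.aemeasurable (μ := μ)
  have := Measure.isProbabilityMeasure_map hr.aemeasurable (μ := ν)
  refine exists_mem_couplings_lintegral_le_of_finite fun a b hab => ?_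
  rw [integral_map hq.aemeasurable (by fun_prop), integral_map hr.aemeasurable (by fun_prop)]
  refine h ((SimpleFunc.ofFinite a).comp q hq) ((SimpleFunc.ofFinite b).comp r hr) fun x y => ?_
  exact (ENNReal.ofReal_le_coe.2 (hab (q x) (r y))).trans
    (fibreInf_apply_le (p := Prod.map q r) n (x, y))

lemma exists_mem_couplings_map_lintegral_cylinderInf_le {Q : X → ℕ → Bool} (hQ : Measurable Q)
    {R : Y → ℕ → Bool} (hR : Measurable R)
    (h : ∀ (u : SimpleFunc X ℝ) (w : SimpleFunc Y ℝ),
      (∀ x y, ENNReal.ofReal (u x + w y) ≤ c (x, y)) → ∫ x, u x ∂μ + ∫ y, w y ∂ν ≤ v) (n : ℕ) :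
    ∃ π ∈ couplings (μ.map Q) (ν.map R),
      ∫⁻ k, cylinderInf (Prod.map Q R) c n k ∂π ≤ ENNReal.ofReal v := by
  have := Measure.isProbabilityMeasure_map hQ.aemeasurable (μ := μ)
  have := Measure.isProbabilityMeasure_map hR.aemeasurable (μ := ν)
  have ht : Measurable (Preorder.frestrictLe (π := fun _ => Bool) n) :=
    Preorder.measurable_frestrictLe n
  obtain ⟨γ, hγ, hγc⟩ :=
    exists_mem_couplings_lintegral_fibreInf_le (ht.comp hQ) (ht.comp hR) h n
  rw [← Measure.map_map ht hQ, ← Measure.map_map ht hR] at hγ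
  obtain ⟨π, hπ, rfl⟩ := exists_mem_couplings_map_prodMap_eq ht ht hγ
  rw [lintegral_map (by fun_prop) (ht.prodMap ht)] at hγc
  exact ⟨π, hπ, hγc⟩

lemma exists_mem_couplings_forall_lintegral_cylinderInf_le [StandardBorelSpace X]
    [StandardBorelSpace Y] {Q : X → ℕ → Bool} (hQ : Measurable Q) {R : Y → ℕ → Bool}
    (hR : Measurable R)
    (h : ∀ (u : SimpleFunc X ℝ) (w : SimpleFunc Y ℝ),
      (∀ x y, ENNReal.ofReal (u x + w y) ≤ c (x, y)) → ∫ x, u x ∂μ + ∫ y, w y ∂ν ≤ v) :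
    ∃ π ∈ couplings μ ν, ∀ n,
      ∫⁻ z, cylinderInf (Prod.map Q R) c n (Prod.map Q R z) ∂π ≤ ENNReal.ofReal v := by
  have := Measure.isProbabilityMeasure_map hQ.aemeasurable (μ := μ)
  have := Measure.isProbabilityMeasure_map hR.aemeasurable (μ := ν)
  obtain ⟨γ, hγ, hγc⟩ := exists_mem_couplings_forall_lintegral_le continuous_cylinderInf
    monotone_cylinderInf (exists_mem_couplings_map_lintegral_cylinderInf_le hQ hR h)
  obtain ⟨π, hπ, rfl⟩ := exists_mem_couplings_map_prodMap_eq hQ hR hγ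
  refine ⟨π, hπ, fun n => ?_⟩
  rw [← lintegral_map (continuous_cylinderInf n).measurable.coe_nnreal_ennreal (hQ.prodMap hR)]
  exact hγc n

theorem exists_mem_couplings_lintegral_le [TopologicalSpace X] [PolishSpace X] [BorelSpace X]
    [TopologicalSpace Y] [PolishSpace Y] [BorelSpace Y] (hc : LowerSemicontinuous c)
    (h : ∀ (u : SimpleFunc X ℝ) (w : SimpleFunc Y ℝ),
      (∀ x y, ENNReal.ofReal (u x + w y) ≤ c (x, y)) → ∫ x, u x ∂μ + ∫ y, w y ∂ν ≤ v) :
    ∃ π ∈ couplings μ ν, ∫⁻ z, c z ∂π ≤ ENNReal.ofReal v := by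
  obtain ⟨Q, hQ, hQX⟩ := exists_measurable_natBool_separating_nhds X
  obtain ⟨R, hR, hRY⟩ := exists_measurable_natBool_separating_nhds Y
  obtain ⟨π, hπ, hπc⟩ := exists_mem_couplings_forall_lintegral_cylinderInf_le hQ hR h
  refine ⟨π, hπ, ?_⟩
  calc ∫⁻ z, c z ∂π
      ≤ ∫⁻ z, ⨆ n, (cylinderInf (Prod.map Q R) c n (Prod.map Q R z) : ℝ≥0∞) ∂π :=
        lintegral_mono (le_iSup_cylinderInf hc hQX hRY)
    _ = ⨆ n, ∫⁻ z, cylinderInf (Prod.map Q R) c n (Prod.map Q R z) ∂π :=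
        lintegral_iSup (fun n => ((continuous_cylinderInf n).measurable.comp
          (hQ.prodMap hR)).coe_nnreal_ennreal) fun m n hmn z =>
          ENNReal.coe_le_coe.2 (monotone_cylinderInf hmn _)
    _ ≤ ENNReal.ofReal v := iSup_le hπc

end Kantorovich

theorem talagrand_inequality_log_concave_general {E : Type*} [NormedAddCommGroup E]
    [NormedSpace ℝ E] [FiniteDimensional ℝ E] [MeasurableSpace E] [BorelSpace E] (μ : Measure E)
    [μ.IsAddHaarMeasure] {ρ : ℝ} (hρ : 0 < ρ) {V : E → ℝ} (hV : StrongConvexOn univ ρ V)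
    {π₀ : Measure E} (hπ₀ : π₀ = μ.withDensity fun x => ENNReal.ofReal (Real.exp (-V x)))
    [IsProbabilityMeasure π₀] (ν : Measure E) [IsProbabilityMeasure ν] :
    ∃ π ∈ couplings π₀ ν,
      ∫⁻ z, ENNReal.ofReal (‖z.1 - z.2‖ ^ 2) ∂π ≤ ENNReal.ofReal (2 / ρ) * klDiv ν π₀ := by
  by_cases hKL : ν ≪ π₀ ∧ Integrable (llr ν π₀) ν
  · have hV_cont : Continuous V := continuousOn_univ.1 <|
      (hV.convexOn fun r => by positivity).continuousOn isOpen_univ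
    have hcost : Continuous fun z : E × E => ENNReal.ofReal (‖z.1 - z.2‖ ^ 2) :=
      ENNReal.continuous_ofReal.comp (by fun_prop)
    rw [klDiv, if_pos hKL, ← ENNReal.ofReal_mul (by positivity)]
    refine exists_mem_couplings_lintegral_le hcost.lowerSemicontinuous fun u w huw => ?_
    exact integral_add_integral_le_mul_integral_llr (prekopaLeindler_of_isAddHaarMeasure μ)
      hV_cont.measurable hV hπ₀ hρ hKL.1 hKL.2
      fun x y => (ENNReal.ofReal_le_ofReal_iff (by positivity)).1 (huw x y)
  · refine ⟨π₀.prod ν, prod_mem_couplings π₀ ν, ?_⟩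
    rw [klDiv, if_neg hKL, ENNReal.mul_top (by positivity)]
    exact le_top

/-- **Talagrand's transportation-cost inequality for log-concave reference measures**:
if `π₀` has density `e^{−V}` with `V` being `ρ`-strongly convex (`ρ > 0`), then for
every probability measure `ν` with `D_KL(ν‖π₀) < ∞`, the infimum over all couplings
of `π₀` and `ν` of the quadratic transport cost is at most `(2/ρ)·D_KL(ν‖π₀)`. -/
theorem talagrand_inequality_log_concave {d : ℕ} (ρ : ℝ) (hρ : 0 < ρ)
    (V : EuclideanSpace ℝ (Fin d) → ℝ)
    (hV : ConvexOn ℝ Set.univ fun x => V x - ρ / 2 * ‖x‖ ^ 2)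
    (π₀ : Measure (EuclideanSpace ℝ (Fin d)))
    (hπ₀ : π₀ = volume.withDensity fun x => ENNReal.ofReal (Real.exp (-V x)))
    [IsProbabilityMeasure π₀]
    (ν : Measure (EuclideanSpace ℝ (Fin d))) [IsProbabilityMeasure ν]
    (hKL : klDiv ν π₀ < ∞) :
    sInf {c : ℝ≥0∞ | ∃ π, IsCoupling π π₀ ν ∧ c = transportCost π}
      ≤ ENNReal.ofReal (2 / ρ) * klDiv ν π₀ := by
  obtain ⟨π, hπ, hcost⟩ :=
    talagrand_inequality_log_concave_general volume hρ (strongConvexOn_iff_convex.2 hV) hπ₀ ν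
  exact sInf_le_of_le ⟨π, hπ, rfl⟩ hcost
end
end
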